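/- arXiv:2505.21989 — 2 statements merged into one kernel-verified Lean document; each statement's English description precedes it below -/
import Mathlib

section
/- For all integers n ≥ 0, ℓ ≥ 2, and k with 1 ≤ k ≤ ℓ, the number of (4,9)-regular overpartitions satisfies R̄_{4,9}(4ℓn + 4k) ≡ 0 (mod 6). -/
/-- Number of partitions of `a` with no part divisible by `ℓ` or `μ`
(the non-overlined parts of an `(ℓ,μ)`-regular overpartition). -/
def regularCount (ℓ μ a : ℕ) : ℕ :=
  Fintype.card {p : a.Partition // ∀ i ∈ p.parts, ¬ ℓ ∣ i ∧ ¬ μ ∣ i}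

/-- Number of partitions of `a` into distinct parts with no part divisible by `ℓ` or `μ`
(the overlined parts of an `(ℓ,μ)`-regular overpartition). -/
def regularDistinctCount (ℓ μ a : ℕ) : ℕ :=
  Fintype.card {p : a.Partition // p.parts.Nodup ∧ ∀ i ∈ p.parts, ¬ ℓ ∣ i ∧ ¬ μ ∣ i}

/-- `Rbar ℓ μ n` is the number of `(ℓ,μ)`-regular overpartitions of `n`: pairs `(λ, δ)`
where `λ` is a partition, `δ` is a partition into distinct parts, `|λ| + |δ| = n`,
and no part of `λ` or `δ` is divisible by `ℓ` or by `μ`. -/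
def Rbar (ℓ μ n : ℕ) : ℕ :=
  ∑ ab ∈ Finset.HasAntidiagonal.antidiagonal n, regularCount ℓ μ ab.1 * regularDistinctCount ℓ μ ab.2

/-!
Write `φ(q) = ∑ q ^ (x ^ 2)` over `x : ℤ`. Gauss's identity
`∏ (1 + q ^ i) * φ(-q) = ∏ (1 - q ^ i)` gives the generating function of the `(4, 9)`-regular
overpartitions as `G = φ(-q ^ 4) φ(-q ^ 9) / (φ(-q) φ(-q ^ 36))`.

Modulo `3`, Frobenius turns this into `G * φ(-q ^ 4) ^ 8 = φ(-q) ^ 8`. Split `φ(-q) = a - b`, where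
the exponents of `a = φ(q ^ 4)` are `0` modulo `4` and those of `b` are `1` modulo `4`. As
`(a - b) ^ 8 = ∑ a ^ (8 - i) * b ^ i` modulo `3`, the terms of `φ(-q) ^ 8` with exponent divisible
by `4` add up to `a ^ 8 + a ^ 4 b ^ 4 + b ^ 8 = (a ^ 4 - b ^ 4) ^ 2`, which is `φ(-q ^ 4) ^ 8` by
Jacobi's quartic identity. Hence the terms of `G` with exponent divisible by `4` add up to `1`.

Modulo `2`, the products generating the overlined parts and the inverse of the non-overlined parts
coincide, so `G = 1`.
-/

open Filter PowerSeries PowerSeries.WithPiTopology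

/-- The theta series `∑ q ^ (x ^ 2)` over `x : ℤ`, evaluated at an element `q` of a topological
ring; Ramanujan's `φ(q)`. -/
noncomputable def thetaSeries {A : Type*} [CommRing A] [TopologicalSpace A] (q : A) : A :=
  ∑' x : ℤ, q ^ (x.natAbs ^ 2)

/-- The theta series `∑ q ^ (x ^ 2)` over the odd integers `x`, twice Ramanujan's `q ψ(q ^ 8)`. -/
noncomputable def oddThetaSeries {A : Type*} [CommRing A] [TopologicalSpace A] (q : A) : A :=
  ∑' x : ℤ, q ^ ((2 * x + 1).natAbs ^ 2)

section Exponents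

variable {ι κ : Type*}

theorem tendsto_atTop_of_cofinite_add {w : ι → ℕ} {v : κ → ℕ} (hw : Tendsto w cofinite atTop)
    (hv : Tendsto v cofinite atTop) :
    Tendsto (fun p : ι × κ ↦ w p.1 + v p.2) cofinite atTop := by
  rw [← coprod_cofinite, Filter.coprod, tendsto_sup]
  exact ⟨tendsto_atTop_mono (fun _ ↦ Nat.le_add_right _ _) (hw.comp tendsto_comap),
    tendsto_atTop_mono (fun _ ↦ Nat.le_add_left _ _) (hv.comp tendsto_comap)⟩

theorem tendsto_natAbs_sq_cofinite : Tendsto (fun x : ℤ ↦ x.natAbs ^ 2) cofinite atTop := by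
  have h : Tendsto (fun x : ℤ ↦ x.natAbs) cofinite atTop := by
    rw [← Nat.cofinite_eq_atTop]
    refine Tendsto.cofinite_of_finite_preimage_singleton fun n ↦ ?_
    exact (Set.finite_Icc (-n : ℤ) n).subset fun x hx ↦ by
      simp only [Set.mem_preimage, Set.mem_singleton_iff] at hx
      simp only [Set.mem_Icc]
      omega
  exact (tendsto_pow_atTop two_ne_zero).comp h

theorem tendsto_odd_natAbs_sq_cofinite :
    Tendsto (fun x : ℤ ↦ (2 * x + 1).natAbs ^ 2) cofinite atTop :=
  tendsto_natAbs_sq_cofinite.comp <| Function.Injective.tendsto_cofinite fun x y h ↦ by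
    simpa using h

end Exponents

section Reindexing

variable {α : Type*} [AddCommMonoid α] [TopologicalSpace α] [ContinuousAdd α]

theorem hasSum_int_of_even_of_odd {f : ℤ → α} {a b : α} (heven : HasSum (fun x ↦ f (2 * x)) a)
    (hodd : HasSum (fun x ↦ f (2 * x + 1)) b) : HasSum f (a + b) := by
  have hinj : Function.Injective fun x : ℤ ↦ 2 * x := mul_right_injective₀ two_ne_zero
  refine (hinj.hasSum_range_iff.2 heven).add_isCompl ?_
    (((add_left_injective 1).comp hinj).hasSum_range_iff.2 hodd)
  simpa [Function.comp_def] using Int.isCompl_even_odd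

theorem hasSum_int_prod_of_even_of_odd {f : ℤ × ℤ → α} {a b : α}
    (heven : HasSum (fun p : ℤ × ℤ ↦ f (p.1 + p.2, p.1 - p.2)) a)
    (hodd : HasSum (fun p : ℤ × ℤ ↦ f (p.1 + p.2 + 1, p.1 - p.2)) b) : HasSum f (a + b) := by
  have hinj_even : Function.Injective fun p : ℤ × ℤ ↦ (p.1 + p.2, p.1 - p.2) := by
    rintro ⟨s, d⟩ ⟨s', d'⟩ h
    simp only [Prod.mk.injEq] at h ⊢
    omega
  have hinj_odd : Function.Injective fun p : ℤ × ℤ ↦ (p.1 + p.2 + 1, p.1 - p.2) := by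
    rintro ⟨s, d⟩ ⟨s', d'⟩ h
    simp only [Prod.mk.injEq] at h ⊢
    omega
  refine (hinj_even.hasSum_range_iff.2 heven).add_isCompl ?_ (hinj_odd.hasSum_range_iff.2 hodd)
  refine isCompl_iff.2 ⟨Set.disjoint_left.2 ?_, codisjoint_iff_le_sup.2 ?_⟩
  · rintro _ ⟨⟨s, d⟩, rfl⟩ ⟨⟨s', d'⟩, h⟩
    simp only [Prod.mk.injEq] at h
    omega
  · rintro ⟨x, y⟩ -
    obtain ⟨s, h | h⟩ := Int.even_or_odd' (x + y)
    · exact .inl ⟨(s, x - s), by simp only [Prod.mk.injEq]; omega⟩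
    · exact .inr ⟨(s, x - s - 1), by simp only [Prod.mk.injEq]; omega⟩

end Reindexing

section ThetaIdentities

variable {R : Type*} [CommRing R] {q : R⟦X⟧} {ι κ : Type*}

theorem X_pow_dvd_pow (hq : constantCoeff q = 0) (n : ℕ) : X ^ n ∣ q ^ n :=
  pow_dvd_pow_of_dvd (X_dvd_iff.2 hq) n

theorem constantCoeff_pow_eq_zero (hq : constantCoeff q = 0) {n : ℕ} (hn : n ≠ 0) :
    constantCoeff (q ^ n) = 0 := by
  rw [map_pow, hq, zero_pow hn]

variable [TopologicalSpace R]

theorem summable_of_X_pow_dvd {w : ι → ℕ} (hw : Tendsto w cofinite atTop) {f : ι → R⟦X⟧}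
    (hf : ∀ i, X ^ w i ∣ f i) : Summable f := by
  refine (summable_iff_summable_coeff _).2 fun d ↦ summable_of_hasFiniteSupport ?_
  refine (eventually_cofinite.1 (hw.eventually_gt_atTop d)).subset fun i hi hd ↦ hi ?_
  exact X_pow_dvd_iff.1 (hf i) d hd

theorem hasSum_thetaSeries (hq : constantCoeff q = 0) :
    HasSum (fun x : ℤ ↦ q ^ (x.natAbs ^ 2)) (thetaSeries q) :=
  (summable_of_X_pow_dvd tendsto_natAbs_sq_cofinite fun _ ↦ X_pow_dvd_pow hq _).hasSum

theorem hasSum_oddThetaSeries (hq : constantCoeff q = 0) :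
    HasSum (fun x : ℤ ↦ q ^ ((2 * x + 1).natAbs ^ 2)) (oddThetaSeries q) :=
  (summable_of_X_pow_dvd tendsto_odd_natAbs_sq_cofinite fun _ ↦ X_pow_dvd_pow hq _).hasSum

theorem summable_mul_of_X_pow_dvd {w : ι → ℕ} (hw : Tendsto w cofinite atTop) {v : κ → ℕ}
    (hv : Tendsto v cofinite atTop) {f : ι → R⟦X⟧} (hf : ∀ i, X ^ w i ∣ f i) {g : κ → R⟦X⟧}
    (hg : ∀ j, X ^ v j ∣ g j) : Summable fun p : ι × κ ↦ f p.1 * g p.2 :=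
  summable_of_X_pow_dvd (tendsto_atTop_of_cofinite_add hw hv) fun p ↦ by
    rw [pow_add]
    exact mul_dvd_mul (hf p.1) (hg p.2)

variable [IsTopologicalRing R] [T2Space R]

theorem hasSum_pow_mul_pow {r s : R⟦X⟧} (hr : constantCoeff r = 0) (hs : constantCoeff s = 0)
    {w : ι → ℕ} (hw : Tendsto w cofinite atTop) {v : κ → ℕ} (hv : Tendsto v cofinite atTop)
    {a b : R⟦X⟧} (ha : HasSum (fun i ↦ r ^ w i) a) (hb : HasSum (fun j ↦ s ^ v j) b) :
    HasSum (fun p : ι × κ ↦ r ^ w p.1 * s ^ v p.2) (a * b) := by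
  have hsum : Summable fun p : ι × κ ↦ r ^ w p.1 * s ^ v p.2 :=
    summable_mul_of_X_pow_dvd (f := (r ^ w ·)) (g := (s ^ v ·)) hw hv
      (fun i ↦ X_pow_dvd_pow hr (w i)) (fun j ↦ X_pow_dvd_pow hs (v j))
  exact HasSum.mul (f := (r ^ w ·)) (g := (s ^ v ·)) ha hb hsum

theorem thetaSeries_eq_add_oddThetaSeries (hq : constantCoeff q = 0) :
    thetaSeries q = thetaSeries (q ^ 4) + oddThetaSeries q := by
  refine (hasSum_thetaSeries hq).unique <| hasSum_int_of_even_of_odd ?_ (hasSum_oddThetaSeries hq)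
  convert hasSum_thetaSeries (constantCoeff_pow_eq_zero hq four_ne_zero) using 2 with x
  rw [← pow_mul, Int.natAbs_mul, mul_pow]
  rfl

theorem oddThetaSeries_neg (q : R⟦X⟧) : oddThetaSeries (-q) = -oddThetaSeries q := by
  rw [oddThetaSeries, oddThetaSeries, ← tsum_neg]
  refine tsum_congr fun x ↦ Odd.neg_pow ?_ q
  exact (Int.natAbs_odd.2 (odd_two_mul_add_one x)).pow

theorem thetaSeries_neg_eq_sub_oddThetaSeries (hq : constantCoeff q = 0) :
    thetaSeries (-q) = thetaSeries (q ^ 4) - oddThetaSeries q := by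
  rw [thetaSeries_eq_add_oddThetaSeries (by rw [map_neg, hq, neg_zero]), oddThetaSeries_neg,
    (by decide : Even 4).neg_pow, sub_eq_add_neg]

theorem thetaSeries_sq_sq (hq : constantCoeff q = 0) :
    thetaSeries (q ^ 2) ^ 2 = thetaSeries (q ^ 4) ^ 2 + oddThetaSeries q ^ 2 := by
  have h2 : constantCoeff (q ^ 2) = 0 := constantCoeff_pow_eq_zero hq two_ne_zero
  have h4 : constantCoeff (q ^ 4) = 0 := constantCoeff_pow_eq_zero hq four_ne_zero
  have hw := tendsto_natAbs_sq_cofinite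
  have hv := tendsto_odd_natAbs_sq_cofinite
  simp only [sq (thetaSeries _), sq (oddThetaSeries _)]
  refine (hasSum_pow_mul_pow h2 h2 hw hw (hasSum_thetaSeries h2) (hasSum_thetaSeries h2)).unique <|
    hasSum_int_prod_of_even_of_odd ?_ ?_
  · convert hasSum_pow_mul_pow h4 h4 hw hw (hasSum_thetaSeries h4) (hasSum_thetaSeries h4) using 2
    simp only [← pow_mul, ← pow_add]
    congr 1
    zify
    simp only [sq_abs]
    ring
  · convert hasSum_pow_mul_pow hq hq hv hv (hasSum_oddThetaSeries hq) (hasSum_oddThetaSeries hq)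
      using 2
    simp only [← pow_mul, ← pow_add]
    congr 1
    zify
    simp only [sq_abs]
    ring

theorem oddThetaSeries_sq (hq : constantCoeff q = 0) :
    oddThetaSeries q ^ 2 = 2 * (thetaSeries (q ^ 8) * oddThetaSeries (q ^ 2)) := by
  have h2 : constantCoeff (q ^ 2) = 0 := constantCoeff_pow_eq_zero hq two_ne_zero
  have h8 : constantCoeff (q ^ 8) = 0 := constantCoeff_pow_eq_zero hq (by norm_num)
  have hw := tendsto_natAbs_sq_cofinite
  have hv := tendsto_odd_natAbs_sq_cofinite
  have hmul := hasSum_pow_mul_pow h8 h2 hw hv (hasSum_thetaSeries h8) (hasSum_oddThetaSeries h2)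
  rw [sq, two_mul]
  refine (hasSum_pow_mul_pow hq hq hv hv (hasSum_oddThetaSeries hq)
    (hasSum_oddThetaSeries hq)).unique <| hasSum_int_prod_of_even_of_odd ?_ ?_
  · convert (Equiv.prodComm ℤ ℤ).hasSum_iff.2 hmul using 2
    simp only [Function.comp_apply, Equiv.prodComm_apply, Prod.swap, ← pow_mul, ← pow_add]
    congr 1
    zify
    simp only [sq_abs]
    ring
  · convert ((Equiv.addRight (1 : ℤ)).prodCongr (Equiv.refl ℤ)).hasSum_iff.2 hmul using 2
    simp only [Function.comp_apply, Equiv.prodCongr_apply, Prod.map, Equiv.coe_addRight,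
      Equiv.refl_apply, ← pow_mul, ← pow_add]
    congr 1
    zify
    simp only [sq_abs]
    ring

-- Jacobi's quartic identity `θ₃ ^ 4 - θ₂ ^ 4 = θ₄ ^ 4` at the nome `q ^ 4`.
theorem thetaSeries_pow_four_sub_oddThetaSeries_pow_four (hq : constantCoeff q = 0) :
    thetaSeries (q ^ 4) ^ 4 - oddThetaSeries q ^ 4 = thetaSeries (-q ^ 4) ^ 4 := by
  have h2 : constantCoeff (q ^ 2) = 0 := constantCoeff_pow_eq_zero hq two_ne_zero
  have h4 : constantCoeff (q ^ 4) = 0 := constantCoeff_pow_eq_zero hq four_ne_zero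
  have hplus := thetaSeries_eq_add_oddThetaSeries h4
  have hminus := thetaSeries_neg_eq_sub_oddThetaSeries h4
  have hsq := thetaSeries_sq_sq h4
  have hodd := oddThetaSeries_sq hq
  have hodd' := oddThetaSeries_sq h2
  simp only [← pow_mul, Nat.reduceMul] at hplus hminus hsq hodd'
  calc thetaSeries (q ^ 4) ^ 4 - oddThetaSeries q ^ 4
      = thetaSeries (q ^ 4) ^ 4
          - 4 * thetaSeries (q ^ 8) ^ 2 * oddThetaSeries (q ^ 2) ^ 2 := by
        linear_combination (-oddThetaSeries q ^ 2
          - 2 * (thetaSeries (q ^ 8) * oddThetaSeries (q ^ 2))) * hodd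
    _ = (thetaSeries (q ^ 16) + oddThetaSeries (q ^ 4)) ^ 4
          - 8 * (thetaSeries (q ^ 16) ^ 2 + oddThetaSeries (q ^ 4) ^ 2)
            * (thetaSeries (q ^ 16) * oddThetaSeries (q ^ 4)) := by
        rw [hplus, hsq, hodd']
        ring
    _ = (thetaSeries (q ^ 16) - oddThetaSeries (q ^ 4)) ^ 4 := by ring
    _ = thetaSeries (-q ^ 4) ^ 4 := by rw [hminus]

end ThetaIdentities

section FiniteGauss

variable {R : Type*} [CommRing R]

/-- The summand of Shanks' finite form of Gauss's identity for `∑ (-1) ^ j * x ^ (j ^ 2)`. -/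
def shanksSummand (x : R) (n s : ℕ) : R :=
  (-1) ^ s * x ^ (s * (n + 1)) *
    ((∏ i ∈ Finset.Ico s n, (1 - x ^ (i + 1))) * ∏ i ∈ Finset.range s, (1 + x ^ i))

theorem prod_range_succ_one_add_pow (x : R) (n : ℕ) :
    ∏ i ∈ Finset.range (n + 1), (1 + x ^ i) = 2 * ∏ i ∈ Finset.range n, (1 + x ^ (i + 1)) := by
  rw [Finset.prod_range_succ', pow_zero, one_add_one_eq_two, mul_comm]

theorem shanksSummand_succ_left (x : R) {n s : ℕ} (h : s ≤ n) :
    shanksSummand x (n + 1) s = x ^ s * (1 - x ^ (n + 1)) * shanksSummand x n s := by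
  rw [shanksSummand, shanksSummand, Finset.prod_Ico_succ_top h]
  ring

theorem shanksSummand_succ_right (x : R) {n s : ℕ} (h : s < n) :
    shanksSummand x n (s + 1) * (1 - x ^ (s + 1)) =
      -(x ^ (n + 1) * (1 + x ^ s) * shanksSummand x n s) := by
  rw [shanksSummand, shanksSummand, Finset.prod_eq_prod_Ico_succ_bot h, Finset.prod_range_succ]
  ring

theorem sum_shanksSummand_sub (x : R) {n t : ℕ} (ht : t ≤ n) :
    ∑ s ∈ Finset.range (t + 1),
        (shanksSummand x (n + 1) s - (1 + x ^ (n + 1)) * shanksSummand x n s) =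
      -(x ^ (n + 1) * (1 + x ^ t) * shanksSummand x n t) := by
  induction t with
  | zero =>
    rw [zero_add, Finset.sum_range_one, shanksSummand_succ_left x ht]
    ring
  | succ t ih =>
    rw [Finset.sum_range_succ, ih (by omega), shanksSummand_succ_left x ht]
    linear_combination -shanksSummand_succ_right x ht

theorem sum_range_shanksSummand_succ (x : R) (n : ℕ) :
    ∑ s ∈ Finset.range (n + 2), shanksSummand x (n + 1) s =
      (1 + x ^ (n + 1)) * (∑ s ∈ Finset.range (n + 1), shanksSummand x n s
        + 2 * ((-1) ^ (n + 1) * x ^ ((n + 1) ^ 2)) * ∏ i ∈ Finset.range n, (1 + x ^ (i + 1))) := by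
  have htelescope := sum_shanksSummand_sub x (le_refl n)
  have hlast : x ^ (n + 1) * (1 + x ^ n) * shanksSummand x n n =
      -(2 * ((-1) ^ (n + 1) * x ^ ((n + 1) ^ 2)) * ∏ i ∈ Finset.range n, (1 + x ^ (i + 1))) := by
    have hprod := prod_range_succ_one_add_pow x n
    rw [Finset.prod_range_succ] at hprod
    rw [shanksSummand, Finset.Ico_self, Finset.prod_empty]
    linear_combination (-1) ^ n * x ^ ((n + 1) ^ 2) * hprod
  rw [Finset.sum_sub_distrib, ← Finset.mul_sum, hlast] at htelescope
  rw [Finset.sum_range_succ, shanksSummand, Finset.Ico_self, Finset.prod_empty,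
    prod_range_succ_one_add_pow]
  linear_combination htelescope

theorem sum_Icc_neg_pow_natAbs_sq_succ (x : R) (n : ℕ) :
    ∑ j ∈ Finset.Icc (-(n + 1 : ℕ) : ℤ) (n + 1 : ℕ), (-x) ^ (j.natAbs ^ 2) =
      ∑ j ∈ Finset.Icc (-n : ℤ) n, (-x) ^ (j.natAbs ^ 2)
        + 2 * ((-1) ^ (n + 1) * x ^ ((n + 1) ^ 2)) := by
  have hsign : (-x) ^ ((n + 1) ^ 2) = (-1) ^ (n + 1) * x ^ ((n + 1) ^ 2) := by
    rw [neg_pow, neg_one_pow_congr (Nat.even_pow' two_ne_zero)]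
  have hends := Finset.sum_Icc_succ_eq_add_endpoints (N := n) fun j : ℤ ↦ (-x) ^ (j.natAbs ^ 2)
  rw [Int.natAbs_neg, ← Nat.cast_succ, Int.natAbs_natCast, Nat.succ_eq_add_one, hsign] at hends
  rw [hends]
  ring

theorem prod_mul_sum_Icc_neg_pow_eq_sum_shanksSummand (x : R) (n : ℕ) :
    (∏ i ∈ Finset.range n, (1 + x ^ (i + 1))) * ∑ j ∈ Finset.Icc (-n : ℤ) n, (-x) ^ (j.natAbs ^ 2) =
      ∑ s ∈ Finset.range (n + 1), shanksSummand x n s := by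
  induction n with
  | zero => simp [shanksSummand]
  | succ n ih =>
    rw [sum_Icc_neg_pow_natAbs_sq_succ, Finset.prod_range_succ, sum_range_shanksSummand_succ, ← ih]
    ring

theorem pow_succ_dvd_prod_mul_sum_Icc_neg_pow_sub (x : R) (n : ℕ) :
    x ^ (n + 1) ∣
      (∏ i ∈ Finset.range n, (1 + x ^ (i + 1))) * ∑ j ∈ Finset.Icc (-n : ℤ) n, (-x) ^ (j.natAbs ^ 2)
        - ∏ i ∈ Finset.range n, (1 - x ^ (i + 1)) := by
  rw [prod_mul_sum_Icc_neg_pow_eq_sum_shanksSummand, Finset.sum_range_succ']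
  have hzero : shanksSummand x n 0 = ∏ i ∈ Finset.range n, (1 - x ^ (i + 1)) := by
    simp [shanksSummand]
  rw [hzero, add_sub_cancel_right]
  refine Finset.dvd_sum fun s _ ↦ ?_
  rw [shanksSummand, add_one_mul, pow_add x (s * (n + 1))]
  exact dvd_mul_of_dvd_left (dvd_mul_of_dvd_right (dvd_mul_left _ _) _) _

end FiniteGauss

section GaussIdentity

variable {R : Type*} [CommRing R] [TopologicalSpace R]

theorem multipliable_one_add_of_X_pow_dvd {u : ℕ → R⟦X⟧} (h : ∀ i, X ^ (i + 1) ∣ u i) :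
    Multipliable fun i ↦ 1 + u i := by
  refine multipliable_one_add_of_tendsto_order_atTop_nhds_top _ <|
    ENat.tendsto_nhds_top_iff_natCast_lt.2 fun n ↦ eventually_atTop.2 ⟨n, fun m hm ↦ ?_⟩
  refine lt_of_lt_of_le ?_ (nat_le_order _ _ (X_pow_dvd_iff.1 (h m)))
  exact_mod_cast Nat.lt_succ_of_le hm

theorem tendsto_zero_of_X_pow_dvd {u : ℕ → R⟦X⟧} (h : ∀ n, X ^ (n + 1) ∣ u n) :
    Tendsto u atTop (nhds 0) := by
  refine (tendsto_iff_coeff_tendsto ..).2 fun d ↦ tendsto_atTop_of_eventually_const (i₀ := d) ?_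
  intro n hn
  rw [map_zero]
  exact X_pow_dvd_iff.1 (h n) d (Nat.lt_succ_of_le hn)

variable [IsTopologicalRing R] [T2Space R] {q : R⟦X⟧}

theorem tprod_one_add_pow_mul_thetaSeries_neg (hq : constantCoeff q = 0) :
    (∏' i : ℕ, (1 + q ^ (i + 1))) * thetaSeries (-q) = ∏' i : ℕ, (1 - q ^ (i + 1)) := by
  have hneg : constantCoeff (-q) = 0 := by rw [map_neg, hq, neg_zero]
  have hplus := (multipliable_one_add_of_X_pow_dvd fun i ↦ X_pow_dvd_pow hq (i + 1)).hasProd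
  have hminus : HasProd (fun i : ℕ ↦ 1 - q ^ (i + 1)) (∏' i : ℕ, (1 - q ^ (i + 1))) := by
    simp only [sub_eq_add_neg]
    exact (multipliable_one_add_of_X_pow_dvd fun i ↦
      (X_pow_dvd_pow hq (i + 1)).trans (dvd_neg.2 dvd_rfl)).hasProd
  have htheta : Tendsto (fun n : ℕ ↦ ∑ j ∈ Finset.Icc (-n : ℤ) n, (-q) ^ (j.natAbs ^ 2)) atTop
      (nhds (thetaSeries (-q))) :=
    (hasSum_thetaSeries hneg).comp (by simpa using Finset.tendsto_Icc_neg)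
  have hlim := (hplus.tendsto_prod_nat.mul htheta).sub hminus.tendsto_prod_nat
  exact sub_eq_zero.1 <| tendsto_nhds_unique hlim <| tendsto_zero_of_X_pow_dvd fun n ↦
    (X_pow_dvd_pow hq (n + 1)).trans (pow_succ_dvd_prod_mul_sum_Icc_neg_pow_sub q n)

end GaussIdentity

section PartProducts

variable {R : Type*} [CommRing R] [TopologicalSpace R]

/-- The product of `1 + e * X ^ n` over the positive integers `n` satisfying `p`. For `e = 1` it
generates the partitions into distinct parts satisfying `p`, and for `e = -1` it is the inverse of
the generating function of the partitions into parts satisfying `p`. -/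
noncomputable def partProduct (e : R⟦X⟧) (p : ℕ → Prop) [DecidablePred p] : R⟦X⟧ :=
  ∏' i : ℕ, if p (i + 1) then 1 + e * X ^ (i + 1) else 1

theorem multipliable_partProduct (e : R⟦X⟧) (p : ℕ → Prop) [DecidablePred p] :
    Multipliable fun i ↦ if p (i + 1) then 1 + e * X ^ (i + 1) else 1 := by
  have h : ∀ i, X ^ (i + 1) ∣ if p (i + 1) then e * X ^ (i + 1) else 0 := fun i ↦ by
    split_ifs
    exacts [dvd_mul_left _ _, dvd_zero _]
  refine (multipliable_one_add_of_X_pow_dvd h).congr fun i ↦ ?_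
  split_ifs <;> simp only [add_zero]

theorem partProduct_dvd (e : R⟦X⟧) {c : ℕ} (hc : 0 < c) :
    partProduct e (c ∣ ·) = ∏' i : ℕ, (1 + e * (X ^ c) ^ (i + 1)) := by
  have hsucc (j : ℕ) : c * (j + 1) - 1 + 1 = c * (j + 1) :=
    Nat.sub_add_cancel (Nat.mul_pos hc j.succ_pos)
  have hinj : Function.Injective fun j ↦ c * (j + 1) - 1 := fun i j h ↦ by
    have := congrArg (· + 1) h
    simpa [hsucc, hc.ne'] using this
  rw [partProduct, ← hinj.tprod_eq]
  · simp only [hsucc, dvd_mul_right, if_true, pow_mul]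
  · intro n hn
    obtain ⟨k, hk⟩ : c ∣ n + 1 := by
      by_contra h
      exact hn (if_neg h)
    obtain ⟨j, rfl⟩ : ∃ j, k = j + 1 := Nat.exists_eq_succ_of_ne_zero (by rintro rfl; simp at hk)
    exact ⟨j, by simp [← hk]⟩

variable [T2Space R]

theorem isUnit_partProduct (e : R⟦X⟧) (p : ℕ → Prop) [DecidablePred p] :
    IsUnit (partProduct e p) := by
  rw [isUnit_iff_constantCoeff, partProduct,
    (multipliable_partProduct e p).map_tprod _ (continuous_constantCoeff R)]
  simp [apply_ite constantCoeff]

variable [IsTopologicalRing R]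

theorem partProduct_mul_partProduct_dvd (e : R⟦X⟧) {ℓ μ : ℕ} (h : ℓ.Coprime μ) :
    partProduct e (fun n ↦ ¬ ℓ ∣ n ∧ ¬ μ ∣ n) * (partProduct e (ℓ ∣ ·) * partProduct e (μ ∣ ·)) =
      partProduct e (1 ∣ ·) * partProduct e (ℓ * μ ∣ ·) := by
  have hmul (p : ℕ → Prop) [DecidablePred p] := multipliable_partProduct e p
  simp only [partProduct]
  rw [← (hmul (ℓ ∣ ·)).tprod_mul (hmul (μ ∣ ·)),
    ← (hmul fun n ↦ ¬ ℓ ∣ n ∧ ¬ μ ∣ n).tprod_mul ((hmul (ℓ ∣ ·)).mul (hmul (μ ∣ ·))),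
    ← (hmul (1 ∣ ·)).tprod_mul (hmul (ℓ * μ ∣ ·))]
  refine tprod_congr fun i ↦ ?_
  have hdvd : ℓ * μ ∣ i + 1 ↔ ℓ ∣ i + 1 ∧ μ ∣ i + 1 :=
    ⟨fun h ↦ ⟨dvd_of_mul_right_dvd h, dvd_of_mul_left_dvd h⟩,
      fun hi ↦ h.mul_dvd_of_dvd_of_dvd hi.1 hi.2⟩
  by_cases hℓ : ℓ ∣ i + 1 <;> by_cases hμ : μ ∣ i + 1 <;> simp [hdvd, hℓ, hμ]

theorem partProduct_one_dvd_mul_thetaSeries {c : ℕ} (hc : 0 < c) :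
    partProduct (1 : R⟦X⟧) (c ∣ ·) * thetaSeries (-X ^ c) = partProduct (-1) (c ∣ ·) := by
  have hX : constantCoeff (X ^ c : R⟦X⟧) = 0 := constantCoeff_pow_eq_zero constantCoeff_X hc.ne'
  rw [partProduct_dvd _ hc, partProduct_dvd _ hc]
  simpa only [one_mul, neg_one_mul, ← sub_eq_add_neg] using tprod_one_add_pow_mul_thetaSeries_neg hX

theorem isUnit_thetaSeries_neg_X_pow {c : ℕ} (hc : 0 < c) :
    IsUnit (thetaSeries (-X ^ c : R⟦X⟧)) :=
  isUnit_of_mul_isUnit_right <| partProduct_one_dvd_mul_thetaSeries (R := R) hc ▸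
    isUnit_partProduct (-1) (c ∣ ·)

end PartProducts

section GeneratingFunctions

variable (R : Type*) [CommRing R]

/-- The generating function of the `(ℓ, μ)`-regular overpartitions, with coefficients in `R`. -/
noncomputable def rbarSeries (ℓ μ : ℕ) : R⟦X⟧ := PowerSeries.mk fun n ↦ (Rbar ℓ μ n : R)

theorem rbarSeries_eq_mul (ℓ μ : ℕ) :
    rbarSeries R ℓ μ = PowerSeries.mk (fun n ↦ (regularCount ℓ μ n : R)) *
      PowerSeries.mk fun n ↦ (regularDistinctCount ℓ μ n : R) := by
  ext n
  simp only [rbarSeries, Rbar, coeff_mul, coeff_mk, Nat.cast_sum, Nat.cast_mul]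

theorem regularDistinctCount_eq_coeff_genFun (ℓ μ n : ℕ) :
    (regularDistinctCount ℓ μ n : R) = coeff n (Nat.Partition.genFun
      fun i c ↦ if c = 1 ∧ ¬ ℓ ∣ i ∧ ¬ μ ∣ i then (1 : R) else 0) := by
  simp only [Nat.Partition.coeff_genFun, regularDistinctCount, Fintype.card_subtype, Finsupp.prod,
    Finset.prod_boole, Finset.sum_boole]
  congr 2
  ext p
  simp only [Finset.mem_filter_univ, Multiset.toFinsupp_support, Multiset.mem_toFinset,
    Multiset.toFinsupp_apply, forall_and]
  refine and_congr_left fun _ ↦ ⟨fun h i ↦ Multiset.count_eq_one_of_mem h, fun h ↦ ?_⟩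
  refine Multiset.nodup_iff_count_le_one.2 fun i ↦ ?_
  by_cases hi : i ∈ p.parts
  · exact (h i hi).le
  · simp [hi]

variable [TopologicalSpace R] [T2Space R]

theorem mk_regularDistinctCount (ℓ μ : ℕ) :
    PowerSeries.mk (fun n ↦ (regularDistinctCount ℓ μ n : R)) =
      partProduct 1 fun n ↦ ¬ ℓ ∣ n ∧ ¬ μ ∣ n := by
  have hgen := Nat.Partition.hasProd_genFun
    fun i c ↦ if c = 1 ∧ ¬ ℓ ∣ i ∧ ¬ μ ∣ i then (1 : R) else 0
  calc PowerSeries.mk (fun n ↦ (regularDistinctCount ℓ μ n : R))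
      = Nat.Partition.genFun fun i c ↦ if c = 1 ∧ ¬ ℓ ∣ i ∧ ¬ μ ∣ i then (1 : R) else 0 := by
        ext n
        rw [coeff_mk, regularDistinctCount_eq_coeff_genFun]
    _ = partProduct 1 fun n ↦ ¬ ℓ ∣ n ∧ ¬ μ ∣ n := by
        rw [partProduct, ← hgen.tprod_eq]
        refine tprod_congr fun i ↦ ?_
        rw [tsum_eq_single 0 fun j hj ↦ by simp [hj]]
        split_ifs <;> simp_all

variable [IsTopologicalRing R]

theorem mk_regularCount_mul_partProduct (ℓ μ : ℕ) :
    PowerSeries.mk (fun n ↦ (regularCount ℓ μ n : R)) *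
      partProduct (-1) (fun n ↦ ¬ ℓ ∣ n ∧ ¬ μ ∣ n) = 1 := by
  have hcount : PowerSeries.mk (fun n ↦ (regularCount ℓ μ n : R)) = PowerSeries.mk fun n ↦
      ((Nat.Partition.restricted n fun i ↦ ¬ ℓ ∣ i ∧ ¬ μ ∣ i).card : R) := by
    ext n
    simp only [coeff_mk, regularCount, Nat.Partition.restricted, Fintype.card_subtype]
  have hprod := (Nat.Partition.hasProd_powerSeriesMk_card_restricted R
    fun i ↦ ¬ ℓ ∣ i ∧ ¬ μ ∣ i).mul (multipliable_partProduct (-1) fun i ↦ ¬ ℓ ∣ i ∧ ¬ μ ∣ i).hasProd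
  rw [hcount, partProduct, ← hprod.tprod_eq]
  refine (tprod_congr fun i ↦ ?_).trans tprod_one
  split_ifs
  · simp_rw [pow_mul]
    rw [neg_one_mul, ← sub_eq_add_neg]
    exact tsum_pow_mul_one_sub_of_constantCoeff_eq_zero (by simp)
  · exact one_mul 1

theorem rbarSeries_mul_partProduct_neg_one (ℓ μ : ℕ) :
    rbarSeries R ℓ μ * partProduct (-1) (fun n ↦ ¬ ℓ ∣ n ∧ ¬ μ ∣ n) =
      partProduct 1 fun n ↦ ¬ ℓ ∣ n ∧ ¬ μ ∣ n := by
  rw [rbarSeries_eq_mul, mul_right_comm, mk_regularCount_mul_partProduct, one_mul,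
    mk_regularDistinctCount]

theorem rbarSeries_mul_thetaSeries {ℓ μ : ℕ} (hℓ : 0 < ℓ) (hμ : 0 < μ) (h : ℓ.Coprime μ) :
    rbarSeries R ℓ μ * (thetaSeries (-X) * thetaSeries (-X ^ (ℓ * μ))) =
      thetaSeries (-X ^ ℓ) * thetaSeries (-X ^ μ) := by
  have hdistinct := partProduct_mul_partProduct_dvd (1 : R⟦X⟧) h
  have hinverse := partProduct_mul_partProduct_dvd (-1 : R⟦X⟧) h
  simp only [← partProduct_one_dvd_mul_thetaSeries hℓ, ← partProduct_one_dvd_mul_thetaSeries hμ,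
    ← partProduct_one_dvd_mul_thetaSeries (Nat.mul_pos hℓ hμ),
    ← partProduct_one_dvd_mul_thetaSeries one_pos, pow_one] at hinverse
  have hunit : IsUnit (partProduct (1 : R⟦X⟧) (1 ∣ ·) * partProduct 1 (ℓ * μ ∣ ·)) :=
    (isUnit_partProduct 1 (1 ∣ ·)).mul (isUnit_partProduct 1 (ℓ * μ ∣ ·))
  refine hunit.mul_left_cancel ?_
  linear_combination -rbarSeries R ℓ μ * hinverse
    + partProduct 1 (ℓ ∣ ·) * thetaSeries (-X ^ ℓ) * (partProduct 1 (μ ∣ ·) * thetaSeries (-X ^ μ))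
      * rbarSeries_mul_partProduct_neg_one R ℓ μ
    + thetaSeries (-X ^ ℓ) * thetaSeries (-X ^ μ) * hdistinct

end GeneratingFunctions

section ResidueClasses

variable (R : Type*) [CommRing R] {m : ℕ} {f g : R⟦X⟧}

/-- The power series whose exponents all lie in the residue class `r` modulo `m`. -/
def residueSupported {m : ℕ} (r : ZMod m) : Submodule R R⟦X⟧ where
  carrier := {f | ∀ n : ℕ, (n : ZMod m) ≠ r → coeff n f = 0}
  zero_mem' _ _ := map_zero _
  add_mem' hf hg n hn := by rw [map_add, hf n hn, hg n hn, add_zero]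
  smul_mem' c f hf n hn := by rw [coeff_smul, hf n hn, smul_zero]

instance residueSupported.gradedMonoid :
    SetLike.GradedMonoid (residueSupported R : ZMod m → Submodule R R⟦X⟧) where
  one_mem n hn := by
    rw [coeff_one, if_neg]
    rintro rfl
    exact hn Nat.cast_zero
  mul_mem r s f g hf hg n hn := by
    rw [coeff_mul]
    refine Finset.sum_eq_zero fun p hp ↦ ?_
    by_cases hr : (p.1 : ZMod m) = r
    · rw [hg p.2 fun hs ↦ hn ?_, mul_zero]
      rw [← Finset.HasAntidiagonal.mem_antidiagonal.1 hp, Nat.cast_add, hr, hs]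
    · rw [hf p.1 hr, zero_mul]

theorem X_pow_mem_residueSupported (m n : ℕ) : X ^ n ∈ residueSupported R (n : ZMod m) :=
  fun k hk ↦ by
    rw [coeff_X_pow, if_neg]
    rintro rfl
    exact hk rfl

/-- The operator keeping only the terms whose exponent is divisible by `m`. -/
noncomputable def multisection (m : ℕ) : R⟦X⟧ →ₗ[R] R⟦X⟧ where
  toFun f := PowerSeries.mk fun n ↦ if m ∣ n then coeff n f else 0
  map_add' f g := by
    ext n
    simp only [coeff_mk, map_add]
    split_ifs <;> simp
  map_smul' c f := by
    ext n
    simp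

variable {R}

theorem coeff_multisection (m n : ℕ) (f : R⟦X⟧) :
    coeff n (multisection R m f) = if m ∣ n then coeff n f else 0 :=
  coeff_mk n fun n ↦ if m ∣ n then coeff n f else 0

theorem multisection_eq_self (hf : f ∈ residueSupported R (0 : ZMod m)) :
    multisection R m f = f := by
  ext n
  rw [coeff_multisection, ite_eq_left_iff]
  exact fun hn ↦ (hf n fun h ↦ hn ((ZMod.natCast_eq_zero_iff n m).1 h)).symm

theorem multisection_eq_zero {r : ZMod m} (hr : r ≠ 0) (hf : f ∈ residueSupported R r) :
    multisection R m f = 0 := by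
  ext n
  rw [coeff_multisection, map_zero, ite_eq_right_iff]
  intro hn
  exact hf n ((ZMod.natCast_eq_zero_iff n m).2 hn ▸ hr.symm)

theorem multisection_mul (f : R⟦X⟧) (hg : g ∈ residueSupported R (0 : ZMod m)) :
    multisection R m (f * g) = multisection R m f * g := by
  ext n
  rw [coeff_multisection, coeff_mul, coeff_mul, Finset.ite_sum_zero]
  simp only [coeff_multisection, ite_zero_mul]
  refine Finset.sum_congr rfl fun p hp ↦ ?_
  by_cases hj : m ∣ p.2
  · simp only [← Finset.HasAntidiagonal.mem_antidiagonal.1 hp, Nat.dvd_add_left hj]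
  · simp only [hg p.2 (mt (ZMod.natCast_eq_zero_iff p.2 m).1 hj), mul_zero, ite_self]

variable [TopologicalSpace R] [T2Space R]

theorem hasSum_mem_residueSupported {ι : Type*} {u : ι → R⟦X⟧} {r : ZMod m} (hu : HasSum u f)
    (hmem : ∀ i, u i ∈ residueSupported R r) : f ∈ residueSupported R r := fun n hn ↦ by
  have hcoeff := (hasSum_iff_hasSum_coeff R).1 hu n
  simp only [hmem _ n hn] at hcoeff
  exact hcoeff.unique hasSum_zero

theorem thetaSeries_mem_residueSupported (hq : constantCoeff f = 0)
    (hf : f ∈ residueSupported R (0 : ZMod m)) :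
    thetaSeries f ∈ residueSupported R (0 : ZMod m) :=
  hasSum_mem_residueSupported (hasSum_thetaSeries hq) fun x ↦ by
    simpa using SetLike.pow_mem_graded (x.natAbs ^ 2) hf

theorem oddThetaSeries_X_mem_residueSupported :
    oddThetaSeries X ∈ residueSupported R (1 : ZMod 4) :=
  hasSum_mem_residueSupported (hasSum_oddThetaSeries constantCoeff_X) fun x ↦ by
    have hsq : (((2 * x + 1).natAbs ^ 2 : ℕ) : ZMod 4) = 1 := by
      have h4 : (4 : ZMod 4) = 0 := CharP.cast_eq_zero (ZMod 4) 4
      rw [← Int.cast_natCast, Int.natCast_pow, Int.natCast_natAbs, sq_abs]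
      push_cast
      linear_combination ((x : ZMod 4) ^ 2 + x) * h4
    exact hsq ▸ X_pow_mem_residueSupported R 4 _

end ResidueClasses

section ModThree

variable {R : Type*} [CommRing R]

-- Frobenius gives `(a - b) ^ 9 = a ^ 9 - b ^ 9`; divide by `a - b`.
theorem sub_pow_eight_of_charP_three [CharP R 3] (a b : R) :
    (a - b) ^ 8 = ∑ i ∈ Finset.range 9, a ^ (8 - i) * b ^ i := by
  have h : (3 : R) = 0 := CharP.cast_eq_zero R 3
  simp only [Finset.sum_range_succ, Finset.sum_range_zero, Nat.reduceSub]
  linear_combination (-3 * a ^ 7 * b + 9 * a ^ 6 * b ^ 2 - 19 * a ^ 5 * b ^ 3 + 23 * a ^ 4 * b ^ 4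
    - 19 * a ^ 3 * b ^ 5 + 9 * a ^ 2 * b ^ 6 - 3 * a * b ^ 7) * h

theorem charP_powerSeries (p : ℕ) [CharP R p] : CharP R⟦X⟧ p :=
  charP_of_injective_ringHom (f := C) C_injective p

theorem multisection_four_sub_pow_eight [CharP R 3] {a b : R⟦X⟧}
    (ha : a ∈ residueSupported R (0 : ZMod 4)) (hb : b ∈ residueSupported R (1 : ZMod 4)) :
    multisection R 4 ((a - b) ^ 8) = (a ^ 4 - b ^ 4) ^ 2 := by
  have := charP_powerSeries (R := R) 3
  have hmem (i : ℕ) : a ^ (8 - i) * b ^ i ∈ residueSupported R (i : ZMod 4) := by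
    simpa using SetLike.mul_mem_graded (SetLike.pow_mem_graded (8 - i) ha)
      (SetLike.pow_mem_graded i hb)
  have hterm (i : ℕ) : multisection R 4 (a ^ (8 - i) * b ^ i) =
      if (i : ZMod 4) = 0 then a ^ (8 - i) * b ^ i else 0 := by
    split_ifs with hi
    · exact multisection_eq_self (hi ▸ hmem i)
    · exact multisection_eq_zero hi (hmem i)
  have h : (3 : R⟦X⟧) = 0 := CharP.cast_eq_zero R⟦X⟧ 3
  calc multisection R 4 ((a - b) ^ 8) = a ^ 8 + a ^ 4 * b ^ 4 + b ^ 8 := by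
        rw [sub_pow_eight_of_charP_three, map_sum]
        simp only [hterm, ZMod.natCast_eq_zero_iff]
        simp [Finset.sum_range_succ]
    _ = (a ^ 4 - b ^ 4) ^ 2 := by linear_combination a ^ 4 * b ^ 4 * h

variable [TopologicalSpace R] [IsTopologicalRing R] [T2Space R]

theorem thetaSeries_pow_expChar_pow (p n : ℕ) [ExpChar R p] {q : R⟦X⟧}
    (hq : constantCoeff q = 0) : thetaSeries q ^ p ^ n = thetaSeries (q ^ p ^ n) := by
  have : ExpChar R⟦X⟧ p := expChar_of_injective_ringHom (f := C) C_injective p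
  have hp : p ^ n ≠ 0 := pow_ne_zero n (expChar_ne_zero R p)
  have hmap := (hasSum_thetaSeries hq).map (iterateFrobenius R⟦X⟧ p n) (continuous_pow (p ^ n))
  refine hmap.unique ?_
  convert hasSum_thetaSeries (constantCoeff_pow_eq_zero hq hp) using 2 with x
  simp only [Function.comp_apply, iterateFrobenius_def, ← pow_mul, mul_comm]

theorem multisection_four_thetaSeries_neg_X_pow_eight [CharP R 3] :
    multisection R 4 (thetaSeries (-X) ^ 8) = thetaSeries (-X ^ 4) ^ 8 := by
  have hX4 : X ^ 4 ∈ residueSupported R (0 : ZMod 4) := X_pow_mem_residueSupported R 4 4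
  rw [thetaSeries_neg_eq_sub_oddThetaSeries constantCoeff_X, multisection_four_sub_pow_eight
    (thetaSeries_mem_residueSupported (by simp) hX4) oddThetaSeries_X_mem_residueSupported,
    thetaSeries_pow_four_sub_oddThetaSeries_pow_four constantCoeff_X, ← pow_mul]

variable (R)

theorem rbarSeries_four_nine_mul_thetaSeries [CharP R 3] :
    rbarSeries R 4 9 * thetaSeries (-X ^ 4) ^ 8 = thetaSeries (-X) ^ 8 := by
  have : ExpChar R 3 := ExpChar.prime Nat.prime_three
  have hfrob1 := thetaSeries_pow_expChar_pow 3 2 (q := (-X : R⟦X⟧)) (by simp)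
  have hfrob4 := thetaSeries_pow_expChar_pow 3 2 (q := (-X ^ 4 : R⟦X⟧)) (by simp)
  have hodd : Odd 9 := by decide
  simp only [Nat.reducePow, hodd.neg_pow, ← pow_mul, Nat.reduceMul] at hfrob1 hfrob4
  have hmain := rbarSeries_mul_thetaSeries R (ℓ := 4) (μ := 9) (by norm_num) (by norm_num)
    (by norm_num)
  rw [← hfrob1, ← hfrob4] at hmain
  have hunit : IsUnit (thetaSeries (-X : R⟦X⟧) * thetaSeries (-X ^ 4)) := by
    simpa only [pow_one] using (isUnit_thetaSeries_neg_X_pow (R := R) one_pos).mul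
      (isUnit_thetaSeries_neg_X_pow four_pos)
  refine hunit.mul_left_cancel ?_
  linear_combination hmain

theorem multisection_four_rbarSeries_four_nine [CharP R 3] :
    multisection R 4 (rbarSeries R 4 9) = 1 := by
  have hmem : thetaSeries (-X ^ 4) ^ 8 ∈ residueSupported R (0 : ZMod 4) := by
    simpa using SetLike.pow_mem_graded 8 (thetaSeries_mem_residueSupported (by simp)
      (neg_mem (X_pow_mem_residueSupported R 4 4)))
  refine ((isUnit_thetaSeries_neg_X_pow four_pos).pow 8).mul_right_cancel ?_
  rw [← multisection_mul _ hmem, rbarSeries_four_nine_mul_thetaSeries,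
    multisection_four_thetaSeries_neg_X_pow_eight, one_mul]

end ModThree

theorem rbarSeries_zmod_two (ℓ μ : ℕ) : rbarSeries (ZMod 2) ℓ μ = 1 := by
  have := charP_powerSeries (R := ZMod 2) 2
  have h := rbarSeries_mul_partProduct_neg_one (ZMod 2) ℓ μ
  rw [CharTwo.neg_eq] at h
  exact (isUnit_partProduct 1 _).mul_right_cancel (h.trans (one_mul _).symm)

theorem two_dvd_Rbar (ℓ μ : ℕ) {n : ℕ} (hn : n ≠ 0) : 2 ∣ Rbar ℓ μ n := by
  have h := congrArg (coeff n) (rbarSeries_zmod_two ℓ μ)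
  rwa [rbarSeries, coeff_mk, coeff_one, if_neg hn, ZMod.natCast_eq_zero_iff] at h

theorem three_dvd_Rbar_four_nine {m : ℕ} (hm : m ≠ 0) : 3 ∣ Rbar 4 9 (4 * m) := by
  have h := congrArg (coeff (4 * m)) (multisection_four_rbarSeries_four_nine (ZMod 3))
  rwa [coeff_multisection, if_pos (dvd_mul_right 4 m), rbarSeries, coeff_mk, coeff_one,
    if_neg (by positivity), ZMod.natCast_eq_zero_iff] at h

theorem Rbar_four_nine_conjecture_general {m : ℕ} (hm : m ≠ 0) : Rbar 4 9 (4 * m) ≡ 0 [MOD 6] := by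
  have hcoprime : Nat.Coprime 2 3 := by norm_num
  exact Nat.modEq_zero_iff_dvd.2 <| hcoprime.mul_dvd_of_dvd_of_dvd
    (two_dvd_Rbar 4 9 (by positivity)) (three_dvd_Rbar_four_nine hm)

theorem Rbar_four_nine_conjecture (n ℓ k : ℕ) (hℓ : 2 ≤ ℓ) (hk1 : 1 ≤ k) (hk2 : k ≤ ℓ) :
    Rbar 4 9 (4 * ℓ * n + 4 * k) ≡ 0 [MOD 6] := by
  rw [mul_assoc, ← mul_add]
  exact Rbar_four_nine_conjecture_general (by omega)
end

section
/- For all integers n ≥ 0, the number of (4,9)-regular overpartitions satisfies R̄_{4,9}(24n+20) ≡ 0 (mod 216). -/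
/-!
Write `φ(-q) = ∑ (-1) ^ j q ^ (j²)`. By Gauss's identity the generating function of all
overpartitions is `1 / φ(-q)`, so that of the `(4, 9)`-regular ones is
`φ(-q⁴) φ(-q⁹) / (φ(-q) φ(-q³⁶))`. Splitting the squares modulo `3` gives
`φ(-q) = φ(-q⁹) (1 - 2v)`, where `v = v(q)` is Ramanujan's cubic continued fraction at `q³`, and the
generating function becomes `(1 - 2v(q⁴)) / (1 - 2v)`. As the exponents of `v` are `1` modulo `3`,
its part with exponents `2` modulo `3` is `4v (v - v(q⁴)) / (1 - 8v³)`.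

Comparing exponents modulo `3` in the identity that `φ(q) φ(-q) = φ(-q²)²` yields for `1 - 2v`, one
finds that `v(q)` and `v(-q)` are the roots of `x² + 2u²x - u` with `u = v(q²)`. Extracting even
exponents is therefore half a trace over this quadratic. Two extractions turn the series above into
`4 · 18v² (1 + v³) (1 + 16v³) / (1 - 8v³)³`, which modulo `216` is `72v² / (1 - 8v³)`. The odd part
of `v² / (1 - 8v³)` is `1 / 2` times a difference of conjugates, and this is divisible by `6`.
-/

open PowerSeries Finset
open scoped PowerSeries.WithPiTopology

namespace Overpartition

section FiniteGauss

variable {R : Type*} [CommRing R] (q : R)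

/-- The product `(1 + q)(1 + q²)⋯(1 + qⁿ)`, the finite form of the generating function of
partitions into distinct parts. -/
def oneAddProd (n : ℕ) : R := ∏ i ∈ range n, (1 + q ^ (i + 1))

/-- The product `(1 - q ^ (s + 1))⋯(1 - q ^ n)`; for `s = 0` it is the `q`-factorial
`(q; q)ₙ`. -/
def oneSubProd (s n : ℕ) : R := ∏ i ∈ Ico s n, (1 - q ^ (i + 1))

/-- The theta sum `∑_{|j| ≤ n} (-1) ^ j q ^ (j²)`, with the terms of `j` and `-j` combined. -/
def thetaSum (n : ℕ) : R := 1 + 2 * ∑ j ∈ range n, (-1) ^ (j + 1) * q ^ ((j + 1) ^ 2)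

/-- The `k`-th error term in the finite form of Gauss's identity. -/
def gaussErrorTerm (n k : ℕ) : R :=
  (-1) ^ (k + 1) * q ^ ((k + 1) * (n + 1)) * oneAddProd q k * oneSubProd q (k + 1) n

lemma oneAddProd_succ (n : ℕ) : oneAddProd q (n + 1) = oneAddProd q n * (1 + q ^ (n + 1)) :=
  prod_range_succ ..

lemma oneSubProd_self (n : ℕ) : oneSubProd q n n = 1 := by
  simp [oneSubProd]

lemma oneSubProd_succ_right {s n : ℕ} (h : s ≤ n) :
    oneSubProd q s (n + 1) = oneSubProd q s n * (1 - q ^ (n + 1)) :=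
  prod_Ico_succ_top h _

lemma oneSubProd_succ_left {s n : ℕ} (h : s < n) :
    oneSubProd q s n = (1 - q ^ (s + 1)) * oneSubProd q (s + 1) n :=
  prod_eq_prod_Ico_succ_bot h _

lemma sum_gaussErrorTerm_sub (n : ℕ) :
    ∑ k ∈ range n, (gaussErrorTerm q (n + 1) k - (1 + q ^ (n + 1)) * gaussErrorTerm q n k) =
      q ^ (n + 1) * oneSubProd q 0 n - (-1) ^ n * q ^ ((n + 1) ^ 2) * oneAddProd q n := by
  let h (k : ℕ) : R := (-1) ^ k * q ^ ((k + 1) * (n + 1)) * oneAddProd q k * oneSubProd q k n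
  have telescope (k : ℕ) (hk : k < n) :
      gaussErrorTerm q (n + 1) k - (1 + q ^ (n + 1)) * gaussErrorTerm q n k = h k - h (k + 1) := by
    simp only [h, gaussErrorTerm]
    rw [oneSubProd_succ_right q (by omega : k + 1 ≤ n), oneSubProd_succ_left q hk,
      oneAddProd_succ]
    ring
  rw [sum_congr rfl fun k hk => telescope k (mem_range.1 hk), sum_range_sub']
  simp [h, oneAddProd, oneSubProd, sq]

theorem oneAddProd_mul_thetaSum (n : ℕ) :
    oneAddProd q n * thetaSum q n =
      oneSubProd q 0 n + 2 * ∑ k ∈ range n, gaussErrorTerm q n k := by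
  induction n with
  | zero => simp [oneAddProd, thetaSum, oneSubProd]
  | succ n ih =>
    have theta_succ : thetaSum q (n + 1) =
        thetaSum q n + 2 * ((-1) ^ (n + 1) * q ^ ((n + 1) ^ 2)) := by
      rw [thetaSum, sum_range_succ, thetaSum]
      ring
    have error := sum_gaussErrorTerm_sub q n
    rw [sum_sub_distrib, ← mul_sum, sub_eq_iff_eq_add] at error
    rw [sum_range_succ, error, theta_succ, oneAddProd_succ, oneSubProd_succ_right q n.zero_le,
      gaussErrorTerm, oneSubProd_self]
    linear_combination (1 + q ^ (n + 1)) * ih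

theorem pow_dvd_oneAddProd_mul_thetaSum_sub (n : ℕ) :
    q ^ (n + 1) ∣ oneAddProd q n * thetaSum q n - oneSubProd q 0 n := by
  rw [oneAddProd_mul_thetaSum, add_sub_cancel_left]
  refine Dvd.dvd.mul_left (dvd_sum fun k _ => ?_) _
  rw [gaussErrorTerm, mul_assoc, mul_assoc]
  exact ((pow_dvd_pow q (Nat.le_mul_of_pos_left _ k.succ_pos)).mul_right _).mul_left _

end FiniteGauss

section Operators

variable {R : Type*} [CommRing R]

/-- The substitution `f(q) ↦ f(q ^ k)`. -/
noncomputable abbrev dilate (k : ℕ) [NeZero k] : R⟦X⟧ →ₐ[R] R⟦X⟧ := expand k (NeZero.ne k)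

lemma dilate_dilate (a b : ℕ) [NeZero a] [NeZero b] (f : R⟦X⟧) :
    dilate a (dilate b f) = dilate (a * b) f :=
  (expand_mul a (NeZero.ne a) b (NeZero.ne b) f).symm

lemma dilate_comm (a b : ℕ) [NeZero a] [NeZero b] (f : R⟦X⟧) :
    dilate a (dilate b f) = dilate b (dilate a f) := by
  simp only [dilate_dilate, mul_comm a b]

lemma dilate_injective (k : ℕ) [NeZero k] :
    Function.Injective (dilate k : R⟦X⟧ → R⟦X⟧) := fun f g h => by
  ext n
  rw [← coeff_expand_mul k (NeZero.ne k) f n, ← coeff_expand_mul k (NeZero.ne k) g n]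
  exact congrArg _ h

lemma coeff_evalNegHom (n : ℕ) (f : R⟦X⟧) : coeff n (evalNegHom f) = (-1) ^ n * coeff n f :=
  coeff_rescale f (-1) n

lemma evalNegHom_dilate_of_even {k : ℕ} [NeZero k] (hk : Even k) (f : R⟦X⟧) :
    evalNegHom (dilate k f) = dilate k f := by
  ext n
  rw [coeff_evalNegHom]
  by_cases h : k ∣ n
  · rw [(hk.trans_dvd h).neg_one_pow, one_mul]
  · rw [coeff_expand_of_not_dvd k (NeZero.ne k) f h, mul_zero]

lemma evalNegHom_dilate_of_odd {k : ℕ} [NeZero k] (hk : Odd k) (f : R⟦X⟧) :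
    evalNegHom (dilate k f) = dilate k (evalNegHom f) := by
  ext n
  rw [coeff_evalNegHom]
  by_cases h : k ∣ n
  · obtain ⟨m, rfl⟩ := h
    rw [coeff_expand_mul, coeff_expand_mul, coeff_evalNegHom, pow_mul, hk.neg_one_pow]
  · rw [coeff_expand_of_not_dvd k (NeZero.ne k) _ h, coeff_expand_of_not_dvd k (NeZero.ne k) _ h,
      mul_zero]

lemma coeff_two_mul_eq_of_add_evalNegHom [NoZeroDivisors R] [NeZero (2 : R)] {f g : R⟦X⟧}
    (h : f + evalNegHom f = 2 * dilate 2 g) (n : ℕ) : coeff (2 * n) f = coeff n g := by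
  have hcoeff := congrArg (coeff (2 * n)) h
  rw [map_add, coeff_evalNegHom, (even_two_mul n).neg_one_pow, one_mul, ← two_mul,
    ← map_ofNat C 2, coeff_C_mul, coeff_expand_mul] at hcoeff
  exact mul_left_cancel₀ two_ne_zero hcoeff

lemma coeff_eq_of_sub_evalNegHom [NoZeroDivisors R] [NeZero (2 : R)] {f g : R⟦X⟧}
    (h : f - evalNegHom f = 2 * g) {n : ℕ} (hn : Odd n) : coeff n f = coeff n g := by
  have hcoeff := congrArg (coeff n) h
  rw [map_sub, coeff_evalNegHom, hn.neg_one_pow, neg_one_mul, sub_neg_eq_add, ← two_mul,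
    ← map_ofNat C 2, coeff_C_mul] at hcoeff
  exact mul_left_cancel₀ two_ne_zero hcoeff

variable [TopologicalSpace R]

lemma continuous_dilate (k : ℕ) [NeZero k] : Continuous (dilate k : R⟦X⟧ → R⟦X⟧) := by
  refine continuous_iff_continuousAt.2 fun f => ?_
  rw [ContinuousAt, WithPiTopology.tendsto_iff_coeff_tendsto]
  intro d
  simp only [coeff_expand]
  split_ifs
  · exact (WithPiTopology.continuous_coeff R _).tendsto f
  · exact tendsto_const_nhds

lemma continuous_evalNegHom [ContinuousMul R] :
    Continuous (evalNegHom : R⟦X⟧ → R⟦X⟧) := by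
  refine continuous_iff_continuousAt.2 fun f => ?_
  rw [ContinuousAt, WithPiTopology.tendsto_iff_coeff_tendsto]
  intro d
  simp only [coeff_evalNegHom]
  exact ((WithPiTopology.continuous_coeff R d).tendsto f).const_mul _

lemma tendsto_zero_of_X_pow_dvd {f : ℕ → R⟦X⟧} (h : ∀ n, X ^ n ∣ f n) :
    Filter.Tendsto f Filter.atTop (nhds 0) := by
  rw [WithPiTopology.tendsto_iff_coeff_tendsto]
  refine fun d => tendsto_atTop_of_eventually_const (i₀ := d + 1) fun n hn => ?_
  rw [map_zero]
  exact X_pow_dvd_iff.1 (h n) d hn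

end Operators

section ResidueClass

variable {R : Type*} [CommRing R] {m : ℕ} {r s t : ZMod m} {f g : R⟦X⟧}

variable (R) in
/-- The power series all of whose exponents are congruent to `r` modulo `m`. These are the
homogeneous components of the grading of `R⟦X⟧` by `ZMod m` used to dissect series. -/
def residueClass {m : ℕ} (r : ZMod m) : Submodule R R⟦X⟧ where
  carrier := {f | ∀ n : ℕ, (n : ZMod m) ≠ r → coeff n f = 0}
  add_mem' hf hg n hn := by rw [map_add, hf n hn, hg n hn, add_zero]
  zero_mem' n _ := map_zero _
  smul_mem' c f hf n hn := by rw [coeff_smul, hf n hn, smul_zero]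

lemma one_mem_residueClass : (1 : R⟦X⟧) ∈ residueClass R (0 : ZMod m) := fun n hn => by
  rw [coeff_one, if_neg]
  rintro rfl
  exact hn Nat.cast_zero

lemma mul_mem_residueClass (hf : f ∈ residueClass R r) (hg : g ∈ residueClass R s)
    (ht : r + s = t := by decide) : f * g ∈ residueClass R t := fun n hn => by
  rw [coeff_mul]
  refine sum_eq_zero fun ⟨a, b⟩ hab => ?_
  obtain rfl := mem_antidiagonal.1 hab
  by_cases ha : (a : ZMod m) = r
  · have hb : (b : ZMod m) ≠ s := fun hb => hn (by rw [Nat.cast_add, ha, hb, ht])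
    rw [hg b hb, mul_zero]
  · rw [hf a ha, zero_mul]

lemma evalNegHom_mem_residueClass (hf : f ∈ residueClass R r) :
    evalNegHom f ∈ residueClass R r := fun n hn => by
  rw [coeff_evalNegHom, hf n hn, mul_zero]

lemma dilate_mem_residueClass (k : ℕ) [NeZero k] (hf : f ∈ residueClass R r)
    (ht : k * r = t := by decide) : dilate k f ∈ residueClass R t := fun n hn => by
  by_cases h : k ∣ n
  · obtain ⟨j, rfl⟩ := h
    rw [coeff_expand_mul]
    exact hf j fun hj => hn (by rw [Nat.cast_mul, hj, ht])
  · exact coeff_expand_of_not_dvd k (NeZero.ne k) f h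

lemma dilate_mem_residueClass_zero {k : ℕ} [NeZero k] (hk : m ∣ k) (f : R⟦X⟧) :
    dilate k f ∈ residueClass R (0 : ZMod m) := fun n hn =>
  coeff_expand_of_not_dvd k (NeZero.ne k) f fun h =>
    hn ((ZMod.natCast_eq_zero_iff n m).2 (hk.trans h))

lemma exists_eq_dilate_of_mem_residueClass_zero [NeZero m]
    (hf : f ∈ residueClass R (0 : ZMod m)) : ∃ g, f = dilate m g := by
  refine ⟨mk fun n => coeff (m * n) f, ?_⟩
  ext n
  by_cases h : m ∣ n
  · obtain ⟨j, rfl⟩ := h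
    rw [coeff_expand_mul, coeff_mk]
  · rw [coeff_expand_of_not_dvd m (NeZero.ne m) _ h]
    exact hf n (mt (ZMod.natCast_eq_zero_iff n m).1 h)

lemma mem_residueClass_zero_of_mul_eq_one [NeZero m] (hf : f ∈ residueClass R (0 : ZMod m))
    (h : f * g = 1) : g ∈ residueClass R (0 : ZMod m) := by
  obtain ⟨f, rfl⟩ := exists_eq_dilate_of_mem_residueClass_zero hf
  have hunit : IsUnit f := by
    rw [isUnit_iff_constantCoeff, ← constantCoeff_expand m (NeZero.ne m)]
    exact (IsUnit.of_mul_eq_one _ h).map constantCoeff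
  obtain ⟨i, hi⟩ := hunit.exists_right_inv
  have hg : g = dilate m i := by
    have hmap : dilate m f * dilate m i = 1 := by rw [← map_mul, hi, map_one]
    exact left_inv_eq_right_inv ((mul_comm _ _).trans h) hmap
  exact hg ▸ dilate_mem_residueClass_zero dvd_rfl i

lemma eq_zero_of_mem_residueClass_of_ne (hr : f ∈ residueClass R r) (hs : f ∈ residueClass R s)
    (h : r ≠ s) : f = 0 := by
  ext n
  by_cases hn : (n : ZMod m) = r
  · exact hs n (hn ▸ h)
  · exact hr n hn

end ResidueClass

section GeneratingFunction

/-- The series `(1 + q ^ i) / (1 - q ^ i)` counting overpartitions all of whose parts equal `i`,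
meaningful for `i ≠ 0`. -/
noncomputable def overpartitionFactor (i : ℕ) : ℤ⟦X⟧ := (1 + X ^ i) * ∑' j : ℕ, X ^ (i * j)

/-- The generating function of overpartitions all of whose parts satisfy `p`, as the product of
the generating functions of the non-overlined and of the overlined parts. -/
noncomputable def restrictedOverpartitionGF (p : ℕ → Prop) [DecidablePred p] : ℤ⟦X⟧ :=
  mk (fun n => (#(Nat.Partition.restricted n p) : ℤ)) *
    mk fun n => (#{d : n.Partition | d.parts.Nodup ∧ ∀ i ∈ d.parts, p i} : ℤ)

/-- The generating function of all overpartitions. -/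
noncomputable def overpartitionGF : ℤ⟦X⟧ := restrictedOverpartitionGF fun _ => True

lemma one_sub_X_pow_ne_zero {i : ℕ} (hi : i ≠ 0) : (1 - X ^ i : ℤ⟦X⟧) ≠ 0 := fun h => by
  simpa [hi] using congrArg constantCoeff h

lemma one_sub_X_pow_mul_overpartitionFactor {i : ℕ} (hi : i ≠ 0) :
    (1 - X ^ i) * overpartitionFactor i = 1 + X ^ i := by
  have geometric : (1 - X ^ i : ℤ⟦X⟧) * ∑' j : ℕ, X ^ (i * j) = 1 := by
    simp_rw [pow_mul]
    exact WithPiTopology.one_sub_mul_tsum_pow_of_constantCoeff_eq_zero (by simp [hi])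
  rw [overpartitionFactor, mul_left_comm, geometric, mul_one]

lemma dilate_overpartitionFactor (k : ℕ) [NeZero k] {i : ℕ} (hi : i ≠ 0) :
    dilate k (overpartitionFactor i) = overpartitionFactor (k * i) := by
  have hki : k * i ≠ 0 := mul_ne_zero (NeZero.ne k) hi
  have hdilate := congrArg (dilate k) (one_sub_X_pow_mul_overpartitionFactor hi)
  simp only [map_mul, map_sub, map_add, map_one, map_pow, expand_X, ← pow_mul] at hdilate
  refine mul_left_cancel₀ (one_sub_X_pow_ne_zero hki) ?_
  rw [hdilate, one_sub_X_pow_mul_overpartitionFactor hki]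

lemma overpartitionFactor_mul_evalNegHom {i : ℕ} (hi : i ≠ 0) :
    overpartitionFactor i * evalNegHom (overpartitionFactor i) =
      if 2 ∣ i then overpartitionFactor i * overpartitionFactor i else 1 := by
  have hfactor := one_sub_X_pow_mul_overpartitionFactor hi
  have hneg := congrArg evalNegHom hfactor
  simp only [map_mul, map_sub, map_add, map_one, map_pow, evalNegHom_X] at hneg
  split_ifs with h
  · rw [(even_iff_two_dvd.2 h).neg_pow, ← hfactor] at hneg
    rw [mul_left_cancel₀ (one_sub_X_pow_ne_zero hi) hneg]
  · rw [(Nat.not_even_iff_odd.1 (mt even_iff_two_dvd.1 h)).neg_pow] at hneg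
    refine mul_left_cancel₀ (one_sub_X_pow_ne_zero hi) ?_
    linear_combination evalNegHom (overpartitionFactor i) * hfactor + hneg

lemma hasProd_card_distinct_restricted (p : ℕ → Prop) [DecidablePred p] :
    HasProd (fun i => if p (i + 1) then 1 + (X : ℤ⟦X⟧) ^ (i + 1) else 1)
      (mk fun n => (#{d : n.Partition | d.parts.Nodup ∧ ∀ i ∈ d.parts, p i} : ℤ)) := by
  convert! Nat.Partition.hasProd_genFun (fun i c => if c = 1 ∧ p i then (1 : ℤ) else 0) using 1
  · ext1 i
    rw [tsum_eq_single 0 fun j hj => by simp [hj, PowerSeries.smul_eq_C_mul]]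
    by_cases hp : p (i + 1) <;> simp [hp, PowerSeries.smul_eq_C_mul]
  · ext n
    rw [coeff_mk, Nat.Partition.coeff_genFun, card_filter]
    push_cast
    refine sum_congr rfl fun d _ => ?_
    rw [Finsupp.prod, prod_ite_zero, prod_const_one]
    refine if_congr ?_ rfl rfl
    simp only [Multiset.toFinsupp_support, Multiset.mem_toFinset, Multiset.toFinsupp_apply,
      Multiset.nodup_iff_count_eq_one, forall_and]

theorem hasProd_restrictedOverpartitionGF (p : ℕ → Prop) [DecidablePred p] :
    HasProd (fun i => if p (i + 1) then overpartitionFactor (i + 1) else 1)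
      (restrictedOverpartitionGF p) := by
  convert! (Nat.Partition.hasProd_powerSeriesMk_card_restricted ℤ p).mul
    (hasProd_card_distinct_restricted p) using 2 with i
  split_ifs
  · exact mul_comm _ _
  · exact (one_mul 1).symm

lemma hasProd_overpartitionGF :
    HasProd (fun i => overpartitionFactor (i + 1)) overpartitionGF := by
  simpa [overpartitionGF] using hasProd_restrictedOverpartitionGF fun _ => True

lemma hasProd_ite_dvd {M : Type*} [CommMonoid M] [TopologicalSpace M] (k : ℕ) [NeZero k]
    {f : ℕ → M} {a : M} (h : HasProd (fun i => f (k * (i + 1))) a) :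
    HasProd (fun i => if k ∣ i + 1 then f (i + 1) else 1) a := by
  have hpos (i : ℕ) : 0 < k * (i + 1) := Nat.mul_pos (NeZero.pos k) i.succ_pos
  have hinj : Function.Injective fun i => k * (i + 1) - 1 := fun i j hij => by
    have hmul : k * (i + 1) = k * (j + 1) := Nat.pred_inj (hpos i) (hpos j) hij
    exact Nat.succ_injective (Nat.eq_of_mul_eq_mul_left (NeZero.pos k) hmul)
  refine (hinj.hasProd_iff fun n hn => if_neg ?_).1 ?_
  · rintro ⟨c, hc⟩
    obtain ⟨i, rfl⟩ : ∃ i, c = i + 1 :=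
      Nat.exists_eq_succ_of_ne_zero fun h0 => by simp [h0] at hc
    exact hn ⟨i, by simp [← hc]⟩
  · convert h using 2 with i
    simp [Nat.sub_add_cancel (hpos i)]

lemma hasProd_dilate_overpartitionGF (k : ℕ) [NeZero k] :
    HasProd (fun i => if k ∣ i + 1 then overpartitionFactor (i + 1) else 1)
      (dilate k overpartitionGF) := by
  refine hasProd_ite_dvd k ?_
  convert hasProd_overpartitionGF.map (dilate k) (continuous_dilate k) using 2 with i
  exact (dilate_overpartitionFactor k i.succ_ne_zero).symm

theorem overpartitionGF_mul_evalNegHom :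
    overpartitionGF * evalNegHom overpartitionGF =
      dilate 2 overpartitionGF * dilate 2 overpartitionGF := by
  have hneg := hasProd_overpartitionGF.map (evalNegHom (A := ℤ)) continuous_evalNegHom
  have hsq := (hasProd_dilate_overpartitionGF 2).mul (hasProd_dilate_overpartitionGF 2)
  refine (hasProd_overpartitionGF.mul hneg).unique ?_
  convert hsq using 2 with i
  rw [Function.comp_apply, overpartitionFactor_mul_evalNegHom i.succ_ne_zero]
  split_ifs <;> simp

theorem restrictedOverpartitionGF_mul_of_coprime {a b : ℕ} [NeZero a] [NeZero b]
    (hab : a.Coprime b) :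
    restrictedOverpartitionGF (fun i => ¬ a ∣ i ∧ ¬ b ∣ i) *
        (dilate a overpartitionGF * dilate b overpartitionGF) =
      overpartitionGF * dilate (a * b) overpartitionGF := by
  have hleft := (hasProd_restrictedOverpartitionGF fun i => ¬ a ∣ i ∧ ¬ b ∣ i).mul
    ((hasProd_dilate_overpartitionGF a).mul (hasProd_dilate_overpartitionGF b))
  refine hleft.unique ?_
  convert hasProd_overpartitionGF.mul (hasProd_dilate_overpartitionGF (a * b)) using 2 with i
  have hdvd : a * b ∣ i + 1 ↔ a ∣ i + 1 ∧ b ∣ i + 1 :=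
    ⟨fun h => ⟨dvd_of_mul_right_dvd h, dvd_of_mul_left_dvd h⟩,
      fun h => hab.mul_dvd_of_dvd_of_dvd h.1 h.2⟩
  by_cases ha : a ∣ i + 1 <;> by_cases hb : b ∣ i + 1 <;> simp [hdvd, ha, hb]

lemma coeff_restrictedOverpartitionGF (a b n : ℕ) :
    coeff n (restrictedOverpartitionGF fun i => ¬ a ∣ i ∧ ¬ b ∣ i) = Rbar a b n := by
  simp [restrictedOverpartitionGF, Rbar, coeff_mul, regularCount, regularDistinctCount,
    Fintype.card_subtype, Nat.Partition.restricted]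

end GeneratingFunction

section Theta

/-- The sign `(-1) ^ n` carried by the exponent `n` in theta series, cut down to squares. -/
def squareSign (n : ℕ) : ℤ := if IsSquare n then (-1) ^ n else 0

/-- Gauss's theta series `φ(-q) = ∑ (-1) ^ j q ^ (j²)`, the sum being over all integers `j`. -/
noncomputable def theta : ℤ⟦X⟧ := mk fun n => if n = 0 then 1 else 2 * squareSign n

/-- The series `-∑ (-1) ^ j q ^ (j²)` over the integers `j ≡ 1` modulo `3`, so that each square
prime to `3` occurs once. -/
noncomputable def cubicTheta : ℤ⟦X⟧ := mk fun n => if n % 3 = 1 then -squareSign n else 0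

lemma squareSign_sq (r : ℕ) : squareSign (r ^ 2) = (-1) ^ r := by
  rw [squareSign, if_pos (IsSquare.sq r)]
  exact neg_one_pow_congr (by simp [Nat.even_pow])

lemma squareSign_nine_mul (n : ℕ) : squareSign (9 * n) = squareSign n := by
  have hsquare : IsSquare (9 * n) ↔ IsSquare n := by
    refine ⟨fun ⟨r, hr⟩ => ?_, fun h => IsSquare.mul ⟨3, rfl⟩ h⟩
    obtain ⟨c, rfl⟩ : 3 ∣ r := by
      have : 3 ∣ r * r := by omega
      simpa [Nat.prime_three.dvd_mul] using this
    exact ⟨c, by linarith⟩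
  rw [squareSign, squareSign, pow_mul]
  simp [hsquare]

lemma squareSign_eq_zero_of_mod_three {n : ℕ} (h9 : ¬ 9 ∣ n) (h3 : n % 3 ≠ 1) :
    squareSign n = 0 := by
  refine if_neg ?_
  rintro ⟨r, rfl⟩
  obtain h | h | h : r % 3 = 0 ∨ r % 3 = 1 ∨ r % 3 = 2 := by omega
  · exact h9 (mul_dvd_mul (Nat.dvd_of_mod_eq_zero h) (Nat.dvd_of_mod_eq_zero h))
  · exact h3 (by simp [Nat.mul_mod, h])
  · exact h3 (by simp [Nat.mul_mod, h])

theorem theta_eq_dilate_nine_sub : theta = dilate 9 theta - 2 * cubicTheta := by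
  ext n
  rw [map_sub, ← map_ofNat C 2, coeff_C_mul, coeff_expand]
  simp only [theta, cubicTheta, coeff_mk]
  by_cases h9 : 9 ∣ n
  · obtain ⟨m, rfl⟩ := h9
    have h3 : 9 * m % 3 ≠ 1 := by omega
    simp [h3, squareSign_nine_mul]
  · have hn : n ≠ 0 := by rintro rfl; simp at h9
    by_cases h3 : n % 3 = 1
    · simp [h9, hn, h3]
    · simp [h9, hn, h3, squareSign_eq_zero_of_mod_three]

lemma cubicTheta_mem_residueClass : cubicTheta ∈ residueClass ℤ (1 : ZMod 3) := fun n hn => by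
  rw [cubicTheta, coeff_mk, if_neg fun h => hn ?_]
  rw [← ZMod.natCast_mod, h, Nat.cast_one]

lemma sum_range_ite_sq {m n : ℕ} (hm : m ≠ 0) (hmn : m ≤ n) :
    ∑ j ∈ range n, (if m = (j + 1) ^ 2 then (-1 : ℤ) ^ (j + 1) else 0) = squareSign m := by
  by_cases hs : ∃ j, m = (j + 1) ^ 2
  · obtain ⟨j, rfl⟩ := hs
    have hj : j ∈ range n := mem_range.2 ((Nat.le_self_pow two_ne_zero (j + 1)).trans hmn)
    rw [sum_eq_single_of_mem j hj fun i _ hi => if_neg fun h => hi ?_, if_pos rfl, squareSign_sq]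
    exact Nat.succ_injective (Nat.pow_left_injective two_ne_zero h).symm
  · rw [sum_eq_zero fun j _ => if_neg fun h => hs ⟨j, h⟩, squareSign, if_neg]
    rintro ⟨r, rfl⟩
    have hr : r ≠ 0 := by rintro rfl; simp at hm
    exact hs ⟨r - 1, by rw [Nat.sub_add_cancel (Nat.pos_of_ne_zero hr), sq]⟩

lemma coeff_thetaSum_X {m n : ℕ} (h : m ≤ n) :
    coeff m (thetaSum (X : ℤ⟦X⟧) n) = coeff m theta := by
  have hterm (j : ℕ) : coeff m ((-1 : ℤ⟦X⟧) ^ (j + 1) * X ^ ((j + 1) ^ 2)) =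
      if m = (j + 1) ^ 2 then (-1 : ℤ) ^ (j + 1) else 0 := by
    rw [show (-1 : ℤ⟦X⟧) ^ (j + 1) = C ((-1) ^ (j + 1)) by simp, coeff_C_mul, coeff_X_pow,
      mul_ite, mul_one, mul_zero]
  rw [thetaSum, theta, coeff_mk, map_add, ← map_ofNat C 2, coeff_C_mul, map_sum, coeff_one]
  simp_rw [hterm]
  by_cases hm : m = 0
  · simp [hm, eq_comm (a := 0)]
  · rw [if_neg hm, if_neg hm, zero_add, sum_range_ite_sq hm h]

lemma tendsto_thetaSum_X :
    Filter.Tendsto (thetaSum (X : ℤ⟦X⟧)) Filter.atTop (nhds theta) := by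
  rw [WithPiTopology.tendsto_iff_coeff_tendsto]
  exact fun d => tendsto_atTop_of_eventually_const fun n hn => coeff_thetaSum_X hn

lemma isUnit_oneSubProd_X (n : ℕ) : IsUnit (oneSubProd (X : ℤ⟦X⟧) 0 n) := by
  simp [isUnit_iff_constantCoeff, oneSubProd]

lemma X_pow_dvd_prod_overpartitionFactor_mul_thetaSum_sub_one (n : ℕ) :
    X ^ n ∣ (∏ i ∈ range n, overpartitionFactor (i + 1)) * thetaSum X n - 1 := by
  have hprod : oneSubProd X 0 n * ∏ i ∈ range n, overpartitionFactor (i + 1) =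
      oneAddProd X n := by
    rw [oneSubProd, ← range_eq_Ico, ← prod_mul_distrib, oneAddProd]
    exact prod_congr rfl fun i _ => one_sub_X_pow_mul_overpartitionFactor i.succ_ne_zero
  rw [← (isUnit_oneSubProd_X n).dvd_mul_left, mul_sub, mul_one, ← mul_assoc, hprod]
  exact (pow_dvd_pow X n.le_succ).trans (pow_dvd_oneAddProd_mul_thetaSum_sub X n)

theorem overpartitionGF_mul_theta : overpartitionGF * theta = 1 := by
  have hlim := (hasProd_overpartitionGF.tendsto_prod_nat.mul tendsto_thetaSum_X).sub_const 1
  exact sub_eq_zero.1 (tendsto_nhds_unique hlim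
    (tendsto_zero_of_X_pow_dvd X_pow_dvd_prod_overpartitionFactor_mul_thetaSum_sub_one))

lemma overpartitionGF_ne_zero : overpartitionGF ≠ 0 :=
  left_ne_zero_of_mul_eq_one overpartitionGF_mul_theta

end Theta

section CubicFraction

/-- Ramanujan's cubic continued fraction `q / (1 + (q³ + q⁶) / (1 + (q⁶ + q¹²) / ⋯))`, as the
quotient of the theta series `cubicTheta` by `φ(-q⁹)`. -/
noncomputable def cubicFraction : ℤ⟦X⟧ := cubicTheta * dilate 9 overpartitionGF

lemma cubicFraction_mem_residueClass : cubicFraction ∈ residueClass ℤ (1 : ZMod 3) :=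
  mul_mem_residueClass cubicTheta_mem_residueClass
    (dilate_mem_residueClass_zero (m := 3) ⟨3, rfl⟩ overpartitionGF)

lemma dilate_nine_overpartitionGF :
    dilate 9 overpartitionGF = overpartitionGF * (1 - 2 * cubicFraction) := by
  have hinv := overpartitionGF_mul_theta
  have hinv9 : dilate 9 overpartitionGF * dilate 9 theta = 1 := by rw [← map_mul, hinv, map_one]
  rw [theta_eq_dilate_nine_sub] at hinv
  rw [cubicFraction]
  linear_combination overpartitionGF * hinv9 - dilate 9 overpartitionGF * hinv

lemma one_sub_two_mul_cubicFraction_mul_evalNegHom :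
    (1 - 2 * cubicFraction) * (1 - 2 * evalNegHom cubicFraction) =
      (1 - 2 * dilate 2 cubicFraction) ^ 2 := by
  have hneg : dilate 9 (evalNegHom overpartitionGF) =
      evalNegHom overpartitionGF * (1 - 2 * evalNegHom cubicFraction) := by
    rw [← evalNegHom_dilate_of_odd (by decide), dilate_nine_overpartitionGF]
    simp only [map_mul, map_sub, map_one, map_ofNat]
  have htwo : dilate 9 (dilate 2 overpartitionGF) =
      dilate 2 overpartitionGF * (1 - 2 * dilate 2 cubicFraction) := by
    rw [dilate_comm, dilate_nine_overpartitionGF]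
    simp only [map_mul, map_sub, map_one, map_ofNat]
  have hmul := overpartitionGF_mul_evalNegHom
  have hmul9 := congrArg (dilate 9) hmul
  rw [map_mul, map_mul, hneg, htwo, dilate_nine_overpartitionGF] at hmul9
  have hne : dilate 2 overpartitionGF ≠ 0 :=
    (map_ne_zero_iff _ (dilate_injective 2)).2 overpartitionGF_ne_zero
  refine mul_left_cancel₀ (mul_ne_zero hne hne) ?_
  linear_combination hmul9 - (1 - 2 * cubicFraction) * (1 - 2 * evalNegHom cubicFraction) * hmul

lemma dilate_two_cubicFraction_mem_residueClass :
    dilate 2 cubicFraction ∈ residueClass ℤ (2 : ZMod 3) :=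
  dilate_mem_residueClass 2 cubicFraction_mem_residueClass

lemma dilate_four_cubicFraction_mem_residueClass :
    dilate 4 cubicFraction ∈ residueClass ℤ (1 : ZMod 3) :=
  dilate_mem_residueClass 4 cubicFraction_mem_residueClass

/-- The difference of the two sides of the product identity for `1 - 2v` is a series with exponents
`1` modulo `3` minus one with exponents `2` modulo `3`, so both vanish. -/
lemma cubicFraction_add_and_mul_evalNegHom :
    cubicFraction + evalNegHom cubicFraction + 2 * dilate 2 cubicFraction ^ 2 = 0 ∧
      cubicFraction * evalNegHom cubicFraction + dilate 2 cubicFraction = 0 := by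
  have hv := cubicFraction_mem_residueClass
  have hneg := evalNegHom_mem_residueClass hv
  have htwo := dilate_two_cubicFraction_mem_residueClass
  have hsum : cubicFraction + evalNegHom cubicFraction + (2 : ℤ) • dilate 2 cubicFraction ^ 2 ∈
      residueClass ℤ (1 : ZMod 3) := by
    rw [sq]
    exact add_mem (add_mem hv hneg) (Submodule.smul_mem _ _ (mul_mem_residueClass htwo htwo))
  have hprod : (2 : ℤ) • (cubicFraction * evalNegHom cubicFraction + dilate 2 cubicFraction) ∈
      residueClass ℤ (2 : ZMod 3) :=
    Submodule.smul_mem _ _ (add_mem (mul_mem_residueClass hv hneg) htwo)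
  simp only [zsmul_eq_mul, Int.cast_ofNat] at hsum hprod
  have : CharZero ℤ⟦X⟧ := charZero_of_injective_ringHom C_injective
  have heq : cubicFraction + evalNegHom cubicFraction + 2 * dilate 2 cubicFraction ^ 2 =
      2 * (cubicFraction * evalNegHom cubicFraction + dilate 2 cubicFraction) := by
    refine mul_left_cancel₀ (two_ne_zero (α := ℤ⟦X⟧)) ?_
    linear_combination -one_sub_two_mul_cubicFraction_mul_evalNegHom
  have hzero := eq_zero_of_mem_residueClass_of_ne hsum (heq ▸ hprod) (by decide)
  exact ⟨hzero, (mul_eq_zero.1 (heq.symm.trans hzero)).resolve_left two_ne_zero⟩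

theorem cubicFraction_add_evalNegHom :
    cubicFraction + evalNegHom cubicFraction = -2 * dilate 2 cubicFraction ^ 2 := by
  linear_combination cubicFraction_add_and_mul_evalNegHom.1

theorem cubicFraction_mul_evalNegHom :
    cubicFraction * evalNegHom cubicFraction = -dilate 2 cubicFraction := by
  linear_combination cubicFraction_add_and_mul_evalNegHom.2

theorem restrictedOverpartitionGF_four_nine_mul :
    restrictedOverpartitionGF (fun i => ¬ 4 ∣ i ∧ ¬ 9 ∣ i) * (1 - 2 * cubicFraction) =
      1 - 2 * dilate 4 cubicFraction := by
  have hfour : dilate (4 * 9) overpartitionGF =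
      dilate 4 overpartitionGF * (1 - 2 * dilate 4 cubicFraction) := by
    rw [← dilate_dilate, dilate_nine_overpartitionGF]
    simp only [map_mul, map_sub, map_one, map_ofNat]
  have hmul := restrictedOverpartitionGF_mul_of_coprime (a := 4) (b := 9) (by decide)
  rw [hfour, dilate_nine_overpartitionGF] at hmul
  have hne : dilate 4 overpartitionGF ≠ 0 :=
    (map_ne_zero_iff _ (dilate_injective 4)).2 overpartitionGF_ne_zero
  refine mul_left_cancel₀ (mul_ne_zero overpartitionGF_ne_zero hne) ?_
  linear_combination hmul

end CubicFraction

section ConjugateRoots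

variable {R : Type*} [CommRing R] {x y u a b c : R}

lemma one_sub_eight_cube_mul_conj (hsum : x + y = -2 * u ^ 2) (hprod : x * y = -u) :
    (1 - 8 * x ^ 3) * (1 - 8 * y ^ 3) = (1 - 8 * u ^ 3) ^ 2 := by
  obtain rfl : y = -2 * u ^ 2 - x := by linear_combination hsum
  grind

lemma inv_one_sub_eight_cube_eq_conj (hsum : x + y = -2 * u ^ 2) (hprod : x * y = -u)
    (ha : (1 - 8 * x ^ 3) * a = 1) (hc : (1 - 8 * u ^ 3) * c = 1) :
    a = (1 - 8 * y ^ 3) * c ^ 2 := by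
  linear_combination (1 - 8 * y ^ 3) * c ^ 2 * ha -
    a * c ^ 2 * one_sub_eight_cube_mul_conj hsum hprod - a * ((1 - 8 * u ^ 3) * c + 1) * hc

lemma mul_sub_mul_inv_add_conj (hsum : x + y = -2 * u ^ 2) (hprod : x * y = -u)
    (ha : (1 - 8 * x ^ 3) * a = 1) (hb : (1 - 8 * y ^ 3) * b = 1) (hc : (1 - 8 * u ^ 3) * c = 1)
    (w : R) :
    x * (x - w) * a + y * (y - w) * b =
      2 * (u * (1 + 10 * u ^ 3 - (7 + 16 * u ^ 3) * u * w) * c ^ 2) := by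
  rw [inv_one_sub_eight_cube_eq_conj hsum hprod ha hc,
    inv_one_sub_eight_cube_eq_conj ((add_comm y x).trans hsum) ((mul_comm y x).trans hprod) hb hc]
  obtain rfl : y = -2 * u ^ 2 - x := by linear_combination hsum
  clear ha hb hc
  grind

lemma mul_inv_sq_add_conj (hsum : x + y = -2 * u ^ 2) (hprod : x * y = -u)
    (ha : (1 - 8 * x ^ 3) * a = 1) (hb : (1 - 8 * y ^ 3) * b = 1) (hc : (1 - 8 * u ^ 3) * c = 1) :
    x * (1 + 10 * x ^ 3 - (7 + 16 * x ^ 3) * x * u) * a ^ 2 +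
        y * (1 + 10 * y ^ 3 - (7 + 16 * y ^ 3) * y * u) * b ^ 2 =
      2 * (18 * u ^ 2 * (1 + u ^ 3) * (1 + 16 * u ^ 3) * c ^ 3) := by
  have cleared : x * (1 + 10 * x ^ 3 - (7 + 16 * x ^ 3) * x * u) * (1 - 8 * y ^ 3) ^ 2 +
      y * (1 + 10 * y ^ 3 - (7 + 16 * y ^ 3) * y * u) * (1 - 8 * x ^ 3) ^ 2 =
      36 * u ^ 2 * (1 + u ^ 3) * (1 + 16 * u ^ 3) * (1 - 8 * u ^ 3) := by
    obtain rfl : y = -2 * u ^ 2 - x := by linear_combination hsum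
    clear ha hb hc
    grind
  rw [inv_one_sub_eight_cube_eq_conj hsum hprod ha hc,
    inv_one_sub_eight_cube_eq_conj ((add_comm y x).trans hsum) ((mul_comm y x).trans hprod) hb hc]
  linear_combination c ^ 4 * cleared +
    36 * u ^ 2 * (1 + u ^ 3) * (1 + 16 * u ^ 3) * c ^ 3 * hc

lemma sq_mul_inv_sub_conj (hsum : x + y = -2 * u ^ 2) (hprod : x * y = -u)
    (ha : (1 - 8 * x ^ 3) * a = 1) (hb : (1 - 8 * y ^ 3) * b = 1) (hc : (1 - 8 * u ^ 3) * c = 1) :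
    x ^ 2 * a - y ^ 2 * b = 2 * (6 * (u ^ 2 * (x + u ^ 2) * c ^ 2)) := by
  rw [inv_one_sub_eight_cube_eq_conj hsum hprod ha hc,
    inv_one_sub_eight_cube_eq_conj ((add_comm y x).trans hsum) ((mul_comm y x).trans hprod) hb hc]
  obtain rfl : y = -2 * u ^ 2 - x := by linear_combination hsum
  clear ha hb hc
  grind

end ConjugateRoots

section Congruence

/-- The series `1 / (1 - 8v³)` for the cubic continued fraction `v`; it is the common denominator
of the dissections below. -/
noncomputable def cubicDenomInv : ℤ⟦X⟧ := invOfUnit (1 - 8 * cubicFraction ^ 3) 1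

lemma constantCoeff_cubicFraction : constantCoeff cubicFraction = 0 := by
  rw [← coeff_zero_eq_constantCoeff_apply]
  exact cubicFraction_mem_residueClass 0 (by decide)

lemma one_sub_mul_cubicDenomInv : (1 - 8 * cubicFraction ^ 3) * cubicDenomInv = 1 :=
  mul_invOfUnit _ _ (by simp [constantCoeff_cubicFraction])

lemma one_sub_mul_evalNegHom_cubicDenomInv :
    (1 - 8 * evalNegHom cubicFraction ^ 3) * evalNegHom cubicDenomInv = 1 := by
  simpa only [map_mul, map_sub, map_pow, map_one, map_ofNat] using
    congrArg evalNegHom one_sub_mul_cubicDenomInv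

lemma one_sub_mul_dilate_cubicDenomInv (k : ℕ) [NeZero k] :
    (1 - 8 * dilate k cubicFraction ^ 3) * dilate k cubicDenomInv = 1 := by
  simpa only [map_mul, map_sub, map_pow, map_one, map_ofNat] using
    congrArg (dilate k) one_sub_mul_cubicDenomInv

lemma cubicDenomInv_mem_residueClass : cubicDenomInv ∈ residueClass ℤ (0 : ZMod 3) := by
  have hv := cubicFraction_mem_residueClass
  have hv2 : cubicFraction * cubicFraction ∈ residueClass ℤ (2 : ZMod 3) :=
    mul_mem_residueClass hv hv
  have hdenom : 1 - (8 : ℤ) • (cubicFraction * cubicFraction * cubicFraction) ∈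
      residueClass ℤ (0 : ZMod 3) :=
    sub_mem one_mem_residueClass (Submodule.smul_mem _ _ (mul_mem_residueClass hv2 hv))
  refine mem_residueClass_zero_of_mul_eq_one hdenom ?_
  rw [zsmul_eq_mul, Int.cast_ofNat]
  linear_combination one_sub_mul_cubicDenomInv

lemma coeff_eq_four_mul_of_mod_three {f : ℤ⟦X⟧}
    (hf : f * (1 - 2 * cubicFraction) = 1 - 2 * dilate 4 cubicFraction) {n : ℕ}
    (hn : n % 3 = 2) :
    coeff n f = 4 * coeff n
      (cubicFraction * (cubicFraction - dilate 4 cubicFraction) * cubicDenomInv) := by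
  have hv := cubicFraction_mem_residueClass
  have hw := dilate_four_cubicFraction_mem_residueClass
  have hd := cubicDenomInv_mem_residueClass
  have hdv := one_sub_mul_cubicDenomInv
  set v := cubicFraction
  set w := dilate 4 cubicFraction
  set d := cubicDenomInv
  have hvw : v * w ∈ residueClass ℤ (2 : ZMod 3) := mul_mem_residueClass hv hw
  have hzero : (1 - (8 : ℤ) • (v * w * v)) * d ∈ residueClass ℤ (0 : ZMod 3) :=
    mul_mem_residueClass
      (sub_mem one_mem_residueClass (Submodule.smul_mem _ _ (mul_mem_residueClass hvw hv))) hd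
  have hone : (2 : ℤ) • ((v - w) * d) ∈ residueClass ℤ (1 : ZMod 3) :=
    Submodule.smul_mem _ _ (mul_mem_residueClass (sub_mem hv hw) hd)
  have hsplit : f = (1 - (8 : ℤ) • (v * w * v)) * d + (2 : ℤ) • ((v - w) * d) +
      (4 : ℤ) • (v * (v - w) * d) := by
    simp only [zsmul_eq_mul, Int.cast_ofNat]
    linear_combination (1 + 2 * v + 4 * v ^ 2) * d * hf - f * hdv
  have hcast : (n : ZMod 3) = 2 := by rw [← ZMod.natCast_mod, hn, Nat.cast_ofNat]
  rw [hsplit, map_add, map_add, hzero n (by rw [hcast]; decide), hone n (by rw [hcast]; decide),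
    zero_add, zero_add, map_zsmul, smul_eq_mul]

lemma coeff_two_mul_mul_cubicDenomInv (n : ℕ) :
    coeff (2 * n) (cubicFraction * (cubicFraction - dilate 4 cubicFraction) * cubicDenomInv) =
      coeff n (cubicFraction * (1 + 10 * cubicFraction ^ 3 -
        (7 + 16 * cubicFraction ^ 3) * cubicFraction * dilate 2 cubicFraction) *
          cubicDenomInv ^ 2) := by
  apply coeff_two_mul_eq_of_add_evalNegHom
  have htrace := mul_sub_mul_inv_add_conj cubicFraction_add_evalNegHom cubicFraction_mul_evalNegHom
    one_sub_mul_cubicDenomInv one_sub_mul_evalNegHom_cubicDenomInv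
    (one_sub_mul_dilate_cubicDenomInv 2) (dilate 4 cubicFraction)
  have hfour : dilate 2 (dilate 2 cubicFraction) = dilate 4 cubicFraction := dilate_dilate 2 2 _
  simpa only [map_mul, map_sub, map_add, map_pow, map_one, map_ofNat, hfour,
    evalNegHom_dilate_of_even (show Even 4 by decide)] using htrace

lemma coeff_two_mul_mul_cubicDenomInv_sq (n : ℕ) :
    coeff (2 * n) (cubicFraction * (1 + 10 * cubicFraction ^ 3 -
        (7 + 16 * cubicFraction ^ 3) * cubicFraction * dilate 2 cubicFraction) *
          cubicDenomInv ^ 2) =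
      coeff n (18 * cubicFraction ^ 2 * (1 + cubicFraction ^ 3) * (1 + 16 * cubicFraction ^ 3) *
        cubicDenomInv ^ 3) := by
  apply coeff_two_mul_eq_of_add_evalNegHom
  have htrace := mul_inv_sq_add_conj cubicFraction_add_evalNegHom cubicFraction_mul_evalNegHom
    one_sub_mul_cubicDenomInv one_sub_mul_evalNegHom_cubicDenomInv
    (one_sub_mul_dilate_cubicDenomInv 2)
  simpa only [map_mul, map_sub, map_add, map_pow, map_one, map_ofNat,
    evalNegHom_dilate_of_even even_two] using htrace

lemma six_dvd_coeff_sq_mul_cubicDenomInv {n : ℕ} (hn : Odd n) :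
    6 ∣ coeff n (cubicFraction ^ 2 * cubicDenomInv) := by
  have hodd := sq_mul_inv_sub_conj cubicFraction_add_evalNegHom cubicFraction_mul_evalNegHom
    one_sub_mul_cubicDenomInv one_sub_mul_evalNegHom_cubicDenomInv
    (one_sub_mul_dilate_cubicDenomInv 2)
  rw [← map_pow, ← map_mul] at hodd
  rw [coeff_eq_of_sub_evalNegHom hodd hn, ← map_ofNat C 6, coeff_C_mul]
  exact dvd_mul_right _ _

lemma fiftyFour_dvd_coeff_of_odd {n : ℕ} (hn : Odd n) :
    54 ∣ coeff n (18 * cubicFraction ^ 2 * (1 + cubicFraction ^ 3) *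
      (1 + 16 * cubicFraction ^ 3) * cubicDenomInv ^ 3) := by
  have hmod : 18 * cubicFraction ^ 2 * (1 + cubicFraction ^ 3) * (1 + 16 * cubicFraction ^ 3) *
      cubicDenomInv ^ 3 = (18 : ℤ) • (cubicFraction ^ 2 * cubicDenomInv) +
        (54 : ℤ) • (cubicFraction ^ 5 * (11 - 16 * cubicFraction ^ 3) * cubicDenomInv ^ 3) := by
    simp only [zsmul_eq_mul, Int.cast_ofNat]
    linear_combination 18 * cubicFraction ^ 2 * cubicDenomInv *
      ((1 - 8 * cubicFraction ^ 3) * cubicDenomInv + 1) * one_sub_mul_cubicDenomInv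
  rw [hmod, map_add, map_zsmul, map_zsmul, smul_eq_mul, smul_eq_mul]
  have hsix := six_dvd_coeff_sq_mul_cubicDenomInv hn
  omega

end Congruence

end Overpartition

theorem Rbar_four_nine_24n_20_mod_216 (n : ℕ) :
    Rbar 4 9 (24 * n + 20) ≡ 0 [MOD 216] := by
  have hfour := Overpartition.coeff_eq_four_mul_of_mod_three
    Overpartition.restrictedOverpartitionGF_four_nine_mul
    (by omega : 2 * (2 * (6 * n + 5)) % 3 = 2)
  rw [Overpartition.coeff_restrictedOverpartitionGF,
    Overpartition.coeff_two_mul_mul_cubicDenomInv,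
    Overpartition.coeff_two_mul_mul_cubicDenomInv_sq] at hfour
  have hodd : Odd (6 * n + 5) := ⟨3 * n + 2, by ring⟩
  have hdvd := Overpartition.fiftyFour_dvd_coeff_of_odd hodd
  rw [show 24 * n + 20 = 2 * (2 * (6 * n + 5)) by ring, Nat.modEq_zero_iff_dvd]
  omega
end
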